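/- arXiv:2311.12667 — 8 statements merged into one kernel-verified Lean document; each statement's English description precedes it below -/
import Mathlib

section
/- For all t₀ ≤ t₁: E(t₁) + Σ_{m=1}^M (2/τ_m) ∫_{t₀}^{t₁} a_VE^m(u_VE^m(s), u_VE^m(s)) ds = E(t₀) (the energy conservation law for the weak formulation of dynamic linear viscoelasticity with the generalized Maxwell model and zero body force and traction). -/
/-!
Test the momentum balance with the velocity, the elastic equation with the displacement and each
arm equation with its own internal variable. By symmetry of the forms the terms exchanging energy
between the inertia, the spring and the arms cancel, so the energy decays exactly at the rate of
dissipation in the arms; the conservation law is the integral of this identity.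
-/

open Set

section Calculus

theorem hasDerivWithinAt_apply_apply_self_of_symm {𝕜 V F : Type*} [NontriviallyNormedField 𝕜]
    [NormedAddCommGroup V] [NormedSpace 𝕜 V] [NormedAddCommGroup F] [NormedSpace 𝕜 F]
    {B : V →L[𝕜] V →L[𝕜] F} (hB : ∀ x y, B x y = B y x) {u : 𝕜 → V} {u' : V} {s : Set 𝕜} {t : 𝕜}
    (hu : HasDerivWithinAt u u' s t) :
    HasDerivWithinAt (fun r ↦ B (u r) (u r)) ((2 : 𝕜) • B u' (u t)) s t := by
  have h := B.hasDerivWithinAt_of_bilinear hu hu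
  rwa [hB (u t) u', ← two_smul 𝕜] at h

theorem integral_eq_sub_of_hasDerivWithinAt_uIcc {E : Type*} [NormedAddCommGroup E]
    [NormedSpace ℝ E] [CompleteSpace E] {f f' : ℝ → E} {a b : ℝ}
    (hderiv : ∀ x ∈ uIcc a b, HasDerivWithinAt f (f' x) (uIcc a b) x)
    (hint : IntervalIntegrable f' MeasureTheory.volume a b) :
    ∫ x in a..b, f' x = f b - f a :=
  intervalIntegral.integral_eq_sub_of_hasDeriv_right
    (fun x hx ↦ (hderiv x hx).continuousWithinAt)
    (fun x hx ↦ ((hderiv x (Ioo_subset_Icc_self hx)).hasDerivAt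
      (Icc_mem_nhds hx.1 hx.2)).hasDerivWithinAt) hint

end Calculus

/-- The generalized Maxwell model of linear viscoelasticity in weak form: the inertia form `m`, the
elastic form `a_E` and, for each Maxwell arm, a form `a_VE` and a relaxation rate. The rate is the
reciprocal `1 / τ` of the relaxation time, so that rate `0` describes an arm that does not relax. -/
structure MaxwellModel (ι V : Type*) [NormedAddCommGroup V] [NormedSpace ℝ V] where
  mass : V →L[ℝ] V →L[ℝ] ℝ
  elastic : V →L[ℝ] V →L[ℝ] ℝ
  arm : ι → V →L[ℝ] V →L[ℝ] ℝ
  rate : ι → ℝ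
  mass_symm : ∀ x y, mass x y = mass y x
  elastic_symm : ∀ x y, elastic x y = elastic y x
  arm_symm : ∀ i x y, arm i x y = arm i y x

namespace MaxwellModel

variable {ι V : Type*} [Fintype ι] [NormedAddCommGroup V] [NormedSpace ℝ V]
  (G : MaxwellModel ι V)

/-- The total energy of the state with velocity `v`, elastic displacement `u` and internal
variables `q`; as in the paper, without the customary factor `1 / 2`. -/
noncomputable def energy (v u : V) (q : ι → V) : ℝ :=
  G.mass v v + G.elastic u u + ∑ i, G.arm i (q i) (q i)

/-- The rate at which the Maxwell arms dissipate `MaxwellModel.energy`. -/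
noncomputable def dissipation (q : ι → V) : ℝ :=
  ∑ i, 2 * G.rate i * G.arm i (q i) (q i)

/-- The equations of motion in weak form at a fixed time, without body force and traction, for a
state `v`, `u`, `q` with time derivatives `v'`, `u'`, `q'`. The last two equations hold only modulo
the kernels of the forms, which need not be definite. -/
structure SatisfiesWeakForm (v u : V) (q : ι → V) (v' u' : V) (q' : ι → V) : Prop where
  momentum : ∀ w, G.mass v' w + G.elastic u w + ∑ i, G.arm i (q i) w = 0
  displacement : ∀ w, G.elastic (u' - v) w = 0
  relaxation : ∀ i w, G.arm i (q' i + G.rate i • q i - v) w = 0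

variable {G}

theorem SatisfiesWeakForm.elastic_power {v u v' u' : V} {q q' : ι → V}
    (h : G.SatisfiesWeakForm v u q v' u' q') : G.elastic u' u = G.elastic u v := by
  have h_test := h.displacement u
  rw [map_sub, sub_apply, sub_eq_zero] at h_test
  rw [h_test, G.elastic_symm]

theorem SatisfiesWeakForm.arm_power {v u v' u' : V} {q q' : ι → V}
    (h : G.SatisfiesWeakForm v u q v' u' q') (i : ι) :
    G.arm i (q' i) (q i) = G.arm i (q i) v - G.rate i * G.arm i (q i) (q i) := by
  have h_test := h.relaxation i (q i)
  simp only [map_sub, map_add, map_smul, sub_apply, add_apply, smul_apply, smul_eq_mul,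
    G.arm_symm i v] at h_test
  linear_combination h_test

theorem SatisfiesWeakForm.power_balance {v u v' u' : V} {q q' : ι → V}
    (h : G.SatisfiesWeakForm v u q v' u' q') :
    2 * G.mass v' v + 2 * G.elastic u' u + ∑ i, 2 * G.arm i (q' i) (q i) = -G.dissipation q := by
  have h_arms : ∑ i, 2 * G.arm i (q' i) (q i) =
      2 * ∑ i, G.arm i (q i) v - G.dissipation q := by
    rw [dissipation, Finset.mul_sum, ← Finset.sum_sub_distrib]
    refine Finset.sum_congr rfl fun i _ ↦ ?_
    rw [h.arm_power]
    ring
  rw [h_arms, h.elastic_power]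
  linear_combination 2 * h.momentum v

theorem hasDerivWithinAt_energy {v u : ℝ → V} {q : ℝ → ι → V} {v' u' : V} {q' : ι → V}
    {s : Set ℝ} {t : ℝ} (hv : HasDerivWithinAt v v' s t) (hu : HasDerivWithinAt u u' s t)
    (hq : HasDerivWithinAt q q' s t) (h : G.SatisfiesWeakForm (v t) (u t) (q t) v' u' q') :
    HasDerivWithinAt (fun r ↦ G.energy (v r) (u r) (q r)) (-G.dissipation (q t)) s t := by
  rw [← h.power_balance]
  exact ((hasDerivWithinAt_apply_apply_self_of_symm G.mass_symm hv).add
    (hasDerivWithinAt_apply_apply_self_of_symm G.elastic_symm hu)).add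
    (HasDerivWithinAt.fun_sum fun i _ ↦
      hasDerivWithinAt_apply_apply_self_of_symm (G.arm_symm i) (hasDerivWithinAt_pi.1 hq i))

variable (G) in
theorem continuous_dissipation : Continuous G.dissipation := by
  unfold dissipation
  fun_prop

variable (G) in
theorem integral_dissipation {q : ℝ → ι → V} {a b : ℝ} (hq : ContinuousOn q (uIcc a b)) :
    ∫ t in a..b, G.dissipation (q t) =
      ∑ i, 2 * G.rate i * ∫ t in a..b, G.arm i (q t i) (q t i) := by
  have h_int (i : ι) : IntervalIntegrable
      (fun t ↦ 2 * G.rate i * G.arm i (q t i) (q t i)) MeasureTheory.volume a b :=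
    ContinuousOn.intervalIntegrable (by fun_prop)
  simp only [dissipation, intervalIntegral.integral_finsetSum fun i _ ↦ h_int i,
    intervalIntegral.integral_const_mul]

end MaxwellModel

theorem viscoelastic_energy_conservation_general {ι V : Type*} [Fintype ι] [NormedAddCommGroup V]
    [NormedSpace ℝ V] (G : MaxwellModel ι V) {t₀ t₁ : ℝ} {v u v' u' : ℝ → V} {q q' : ℝ → ι → V}
    (hv : ∀ t ∈ uIcc t₀ t₁, HasDerivWithinAt v (v' t) (uIcc t₀ t₁) t)
    (hu : ∀ t ∈ uIcc t₀ t₁, HasDerivWithinAt u (u' t) (uIcc t₀ t₁) t)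
    (hq : ∀ t ∈ uIcc t₀ t₁, HasDerivWithinAt q (q' t) (uIcc t₀ t₁) t)
    (h : ∀ t ∈ uIcc t₀ t₁, G.SatisfiesWeakForm (v t) (u t) (q t) (v' t) (u' t) (q' t)) :
    G.energy (v t₁) (u t₁) (q t₁)
        + ∑ i, 2 * G.rate i * ∫ s in t₀..t₁, G.arm i (q s i) (q s i)
      = G.energy (v t₀) (u t₀) (q t₀) := by
  have hq_cont : ContinuousOn q (uIcc t₀ t₁) := fun t ht ↦ (hq t ht).continuousWithinAt
  have h_diss : ContinuousOn (fun t ↦ -G.dissipation (q t)) (uIcc t₀ t₁) :=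
    (G.continuous_dissipation.comp_continuousOn hq_cont).neg
  have h_ftc := integral_eq_sub_of_hasDerivWithinAt_uIcc
    (fun t ht ↦ MaxwellModel.hasDerivWithinAt_energy (hv t ht) (hu t ht) (hq t ht) (h t ht))
    h_diss.intervalIntegrable
  rw [intervalIntegral.integral_neg, G.integral_dissipation hq_cont] at h_ftc
  linear_combination -h_ftc

/-- Energy conservation for the weak formulation of dynamic linear viscoelasticity
with the generalized Maxwell model (`M` Maxwell arms) and zero body force and
traction: for `t₀ ≤ t₁`,
`E(t₁) + ∑_m (2/τ_m) ∫_{t₀}^{t₁} a_VE^m(u_VE^m(s), u_VE^m(s)) ds = E(t₀)`,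
where `E(t) = m(u₁,u₁) + a_E(u₀,u₀) + ∑_m a_VE^m(u_VE^m,u_VE^m)`. -/
theorem viscoelastic_energy_conservation
    {V : Type*} [NormedAddCommGroup V] [NormedSpace ℝ V]
    (M : ℕ) (hM : 1 ≤ M)
    (mF aE : V →L[ℝ] V →L[ℝ] ℝ) (aVE : Fin M → V →L[ℝ] V →L[ℝ] ℝ)
    (hmF_symm : ∀ x y : V, mF x y = mF y x)
    (haE_symm : ∀ x y : V, aE x y = aE y x)
    (haVE_symm : ∀ (m : Fin M) (x y : V), aVE m x y = aVE m y x)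
    (τ : Fin M → ℝ) (hτ : ∀ m, 0 < τ m)
    (t₀ t₁ : ℝ) (ht : t₀ ≤ t₁)
    (u1 u0 u1' u0' : ℝ → V) (uVE uVE' : Fin M → ℝ → V)
    (hu1 : ∀ t, HasDerivAt u1 (u1' t) t) (hu1' : Continuous u1')
    (hu0 : ∀ t, HasDerivAt u0 (u0' t) t) (hu0' : Continuous u0')
    (huVE : ∀ m t, HasDerivAt (uVE m) (uVE' m t) t)
    (huVE' : ∀ m, Continuous (uVE' m))
    (heq1 : ∀ t ∈ Set.Icc t₀ t₁, ∀ w : V,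
      mF (u1' t) w + aE (u0 t) w + ∑ m, aVE m (uVE m t) w = 0)
    (heq2 : ∀ t ∈ Set.Icc t₀ t₁, ∀ w : V, aE (u0' t - u1 t) w = 0)
    (heq3 : ∀ t ∈ Set.Icc t₀ t₁, ∀ (m : Fin M) (w : V),
      aVE m (uVE' m t + (1 / τ m) • uVE m t - u1 t) w = 0) :
    (mF (u1 t₁) (u1 t₁) + aE (u0 t₁) (u0 t₁)
        + ∑ m, aVE m (uVE m t₁) (uVE m t₁))
      + ∑ m, (2 / τ m) * ∫ s in t₀..t₁, aVE m (uVE m s) (uVE m s)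
    = mF (u1 t₀) (u1 t₀) + aE (u0 t₀) (u0 t₀)
        + ∑ m, aVE m (uVE m t₀) (uVE m t₀) := by
  let G : MaxwellModel (Fin M) V := ⟨mF, aE, aVE, fun m ↦ 1 / τ m, hmF_symm, haE_symm, haVE_symm⟩
  simpa only [MaxwellModel.energy, G, mul_one_div] using
    viscoelastic_energy_conservation_general G (q := fun t m ↦ uVE m t)
      (fun t _ ↦ (hu1 t).hasDerivWithinAt) (fun t _ ↦ (hu0 t).hasDerivWithinAt)
      (fun t _ ↦ hasDerivWithinAt_pi.2 fun m ↦ (huVE m t).hasDerivWithinAt)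
      (uIcc_of_le ht ▸ fun t ht ↦ ⟨heq1 t ht, heq2 t ht, heq3 t ht⟩)
end

section
/- For any two node indices i ≤ j: E(t_j) + Σ_{m=1}^M (2/τ_m) Σ_{n=i+1}^{j} k_n · a_VE^m(Ū_{VE,n}^m, Ū_{VE,n}^m) = E(t_i), where Ū_{VE,n}^m = (U_VE^m(t_{n−1}) + U_VE^m(t_n))/2; i.e., the space-time finite element method with continuous piecewise linear trial functions and piecewise constant test functions in time satisfies the discrete energy conservation law. -/
/-!
The integrands of the three variational equations are affine in time on each step, so their
integrals are the step size times their midpoint values: the method is a midpoint rule. Test the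
three midpoint equations with the midpoints `v`, `u` and `zₘ` of the velocity, the displacement
and the internal variables. Since `2 B(y - x, (x + y) / 2) = B(y, y) - B(x, x)` for a symmetric
form `B`, the difference quotients become energy increments; the coupling terms `aE(u, v)` and
`aVEₘ(zₘ, v)` cancel in the sum, and only the dissipation `2 k ∑ₘ aVEₘ(zₘ, zₘ) / τₘ` remains.
These balances telescope over the time steps.
-/

section AffineOnIcc

variable {E F : Type*} [AddCommGroup E] [Module ℝ E] [AddCommGroup F] [Module ℝ F] {a b : ℝ}

/-- The space of functions that are affine on `[a, b]`, i.e. the trial functions on one time step.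
Affinity is expressed as agreement with the linear interpolant of the values at the endpoints. -/
def affineOnIcc (E : Type*) [AddCommGroup E] [Module ℝ E] (a b : ℝ) : Submodule ℝ (ℝ → E) where
  carrier := {U | ∀ s ∈ Set.Icc a b, U s = U a + ((s - a) / (b - a)) • (U b - U a)}
  zero_mem' s _ := by simp
  add_mem' {U W} hU hW s hs := by
    simp only [Pi.add_apply]
    rw [hU s hs, hW s hs]
    module
  smul_mem' c U hU s hs := by
    simp only [Pi.smul_apply]
    rw [hU s hs]
    module

theorem const_mem_affineOnIcc (c : E) : (fun _ ↦ c) ∈ affineOnIcc E a b :=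
  fun s _ ↦ by simp

theorem comp_mem_affineOnIcc (φ : E →ₗ[ℝ] F) {U : ℝ → E} (hU : U ∈ affineOnIcc E a b) :
    (fun s ↦ φ (U s)) ∈ affineOnIcc F a b :=
  fun s hs ↦ by simp only [hU s hs, map_add, map_smul, map_sub]

theorem integral_eq_smul_midpoint_of_mem_affineOnIcc {E : Type*} [NormedAddCommGroup E]
    [NormedSpace ℝ E] [CompleteSpace E] {U : ℝ → E} (hab : a < b) (hU : U ∈ affineOnIcc E a b) :
    ∫ s in a..b, U s = (b - a) • midpoint ℝ (U a) (U b) := by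
  have hk : b - a ≠ 0 := sub_ne_zero.2 hab.ne'
  have weight : ∫ s in a..b, (s - a) / (b - a) = (b - a) / 2 := by
    rw [intervalIntegral.integral_div, intervalIntegral.integral_comp_sub_right (fun s ↦ s),
      integral_id]
    field_simp
    ring
  calc ∫ s in a..b, U s
      = ∫ s in a..b, (U a + ((s - a) / (b - a)) • (U b - U a)) :=
        intervalIntegral.integral_congr fun s hs ↦ hU s (Set.uIcc_of_le hab.le ▸ hs)
    _ = (b - a) • U a + ((b - a) / 2) • (U b - U a) := by
        rw [intervalIntegral.integral_add intervalIntegrable_const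
            (Continuous.intervalIntegrable (by fun_prop) _ _),
          intervalIntegral.integral_const, intervalIntegral.integral_smul_const, weight]
    _ = (b - a) • midpoint ℝ (U a) (U b) := by
        rw [midpoint_eq_smul_add, invOf_eq_inv]
        module

theorem midpoint_eq_zero_of_integral_eq_zero {E : Type*} [NormedAddCommGroup E]
    [NormedSpace ℝ E] [CompleteSpace E] {U : ℝ → E} (hab : a < b) (hU : U ∈ affineOnIcc E a b)
    (hint : ∫ s in a..b, U s = 0) : midpoint ℝ (U a) (U b) = 0 := by
  rw [integral_eq_smul_midpoint_of_mem_affineOnIcc hab hU] at hint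
  exact (smul_eq_zero.1 hint).resolve_left (sub_ne_zero.2 hab.ne')

theorem apply_midpoint_eq_zero_of_integral_eq_zero {φ : E →ₗ[ℝ] ℝ} {U : ℝ → E} (hab : a < b)
    (hU : U ∈ affineOnIcc E a b) (hint : ∫ s in a..b, φ (U s) = 0) :
    φ (midpoint ℝ (U a) (U b)) = 0 :=
  (φ.toAffineMap.map_midpoint (U a) (U b)).trans
    (midpoint_eq_zero_of_integral_eq_zero hab (comp_mem_affineOnIcc φ hU) hint)

end AffineOnIcc

theorem two_mul_bilinForm_sub_midpoint {R V : Type*} [CommRing R] [Invertible (2 : R)]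
    [AddCommGroup V] [Module R V] {B : LinearMap.BilinForm R V}
    (hB : B.IsSymm) (x y : V) : 2 * B (y - x) (midpoint R x y) = B y y - B x x := by
  rw [midpoint_eq_smul_add, map_smul, smul_eq_mul, mul_invOf_cancel_left', map_add]
  simp only [map_sub, LinearMap.sub_apply, hB.eq x y]
  ring

section Viscoelastic

variable {V ι : Type*} [AddCommGroup V] [Module ℝ V] [Fintype ι]
  {mF aE : LinearMap.BilinForm ℝ V} {aVE : ι → LinearMap.BilinForm ℝ V}

/-- The energy `E = m(v, v) + a_E(u, u) + ∑ₘ a_VEᵐ(zₘ, zₘ)` of a viscoelastic body with velocity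
`v`, elastic displacement `u` and internal variables `z`. It is twice the physical energy. -/
def viscoelasticEnergy (mF aE : LinearMap.BilinForm ℝ V) (aVE : ι → LinearMap.BilinForm ℝ V)
    (v u : V) (z : ι → V) : ℝ :=
  mF v v + aE u u + ∑ m, aVE m (z m) (z m)

theorem viscoelasticEnergy_sub_of_midpoint_step (hmF : mF.IsSymm) (haE : aE.IsSymm)
    (haVE : ∀ m, (aVE m).IsSymm) {rate : ι → ℝ} {k : ℝ} (hk : k ≠ 0) {v v' u u' : V}
    {z z' : ι → V}
    (momentum : mF (k⁻¹ • (v' - v)) (midpoint ℝ v v') + aE (midpoint ℝ u u') (midpoint ℝ v v')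
      + ∑ m, aVE m (midpoint ℝ (z m) (z' m)) (midpoint ℝ v v') = 0)
    (elastic : aE (k⁻¹ • (u' - u) - midpoint ℝ v v') (midpoint ℝ u u') = 0)
    (viscous : ∀ m, aVE m (k⁻¹ • (z' m - z m) + rate m • midpoint ℝ (z m) (z' m)
      - midpoint ℝ v v') (midpoint ℝ (z m) (z' m)) = 0) :
    viscoelasticEnergy mF aE aVE v' u' z' - viscoelasticEnergy mF aE aVE v u z
      = -∑ m, 2 * rate m *
          (k * aVE m (midpoint ℝ (z m) (z' m)) (midpoint ℝ (z m) (z' m))) := by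
  have increment_eq_quotient {B : LinearMap.BilinForm ℝ V} (hB : B.IsSymm) (x y : V) :
      B y y - B x x = 2 * k * B (k⁻¹ • (y - x)) (midpoint ℝ x y) := by
    rw [← two_mul_bilinForm_sub_midpoint hB, map_smul, LinearMap.smul_apply, smul_eq_mul]
    field_simp
  have mass_increment := increment_eq_quotient hmF v v'
  have elastic_increment : aE u' u' - aE u u
      = 2 * k * aE (midpoint ℝ u u') (midpoint ℝ v v') := by
    rw [map_sub, LinearMap.sub_apply, haE.eq (midpoint ℝ v v')] at elastic
    linear_combination increment_eq_quotient haE u u' + 2 * k * elastic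
  have viscous_increment (m : ι) : aVE m (z' m) (z' m) - aVE m (z m) (z m)
      = 2 * k * aVE m (midpoint ℝ (z m) (z' m)) (midpoint ℝ v v')
        - 2 * rate m * (k * aVE m (midpoint ℝ (z m) (z' m)) (midpoint ℝ (z m) (z' m))) := by
    have h := viscous m
    rw [map_sub, map_add, LinearMap.sub_apply, LinearMap.add_apply, map_smul _ (rate m),
      LinearMap.smul_apply, smul_eq_mul, (haVE m).eq (midpoint ℝ v v')] at h
    linear_combination increment_eq_quotient (haVE m) (z m) (z' m) + 2 * k * h
  have viscous_total := Finset.sum_congr rfl fun m (_ : m ∈ Finset.univ) ↦ viscous_increment m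
  rw [Finset.sum_sub_distrib, Finset.sum_sub_distrib, ← Finset.mul_sum] at viscous_total
  simp only [viscoelasticEnergy]
  linear_combination mass_increment + elastic_increment + viscous_total + 2 * k * momentum

variable {a b : ℝ} {U₁ U₀ : ℝ → V} {Z : ι → ℝ → V}

theorem momentum_midpoint_of_integral_eq_zero (hab : a < b) (hU₀ : U₀ ∈ affineOnIcc V a b)
    (hZ : ∀ m, Z m ∈ affineOnIcc V a b) {d w : V}
    (hint : ∫ s in a..b, (mF d w + aE (U₀ s) w + ∑ m, aVE m (Z m s) w) = 0) :
    mF d w + aE (midpoint ℝ (U₀ a) (U₀ b)) w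
      + ∑ m, aVE m (midpoint ℝ (Z m a) (Z m b)) w = 0 := by
  have hsum : (fun s ↦ ∑ m, aVE m (Z m s) w) ∈ affineOnIcc ℝ a b := by
    rw [← Finset.sum_fn]
    exact sum_mem fun m _ ↦ comp_mem_affineOnIcc (LinearMap.flip (aVE m) w) (hZ m)
  have hmid := midpoint_eq_zero_of_integral_eq_zero hab
    (add_mem (add_mem (const_mem_affineOnIcc (mF d w))
      (comp_mem_affineOnIcc (LinearMap.flip aE w) hU₀)) hsum) hint
  rw [← hmid]
  simp only [midpoint_eq_smul_add, map_smul, map_add, LinearMap.smul_apply, LinearMap.add_apply,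
    smul_eq_mul, ← Finset.mul_sum, Finset.sum_add_distrib, Pi.add_apply, LinearMap.flip_apply,
    invOf_eq_inv]
  ring

theorem elastic_midpoint_of_integral_eq_zero (hab : a < b) (hU₁ : U₁ ∈ affineOnIcc V a b)
    {d w : V} (hint : ∫ s in a..b, aE (d - U₁ s) w = 0) :
    aE (d - midpoint ℝ (U₁ a) (U₁ b)) w = 0 := by
  have hmid := apply_midpoint_eq_zero_of_integral_eq_zero (φ := LinearMap.flip aE w) hab
    (sub_mem (const_mem_affineOnIcc d) hU₁) hint
  rwa [← midpoint_self ℝ d, ← vsub_eq_sub (midpoint ℝ d d), midpoint_vsub_midpoint]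

theorem viscous_midpoint_of_integral_eq_zero {B : LinearMap.BilinForm ℝ V} {W : ℝ → V}
    (hab : a < b) (hU₁ : U₁ ∈ affineOnIcc V a b) (hW : W ∈ affineOnIcc V a b) {r : ℝ} {d w : V}
    (hint : ∫ s in a..b, B (d + r • W s - U₁ s) w = 0) :
    B (d + r • midpoint ℝ (W a) (W b) - midpoint ℝ (U₁ a) (U₁ b)) w = 0 := by
  have hmid := apply_midpoint_eq_zero_of_integral_eq_zero (φ := LinearMap.flip B w) hab
    (sub_mem (add_mem (const_mem_affineOnIcc d) (Submodule.smul_mem _ r hW)) hU₁) hint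
  have midpoint_combination : d + r • midpoint ℝ (W a) (W b) - midpoint ℝ (U₁ a) (U₁ b)
      = midpoint ℝ (d + r • W a - U₁ a) (d + r • W b - U₁ b) := by
    simp only [midpoint_eq_smul_add, invOf_eq_inv]
    module
  rwa [midpoint_combination]

theorem viscoelastic_discrete_energy_conservation_general (hmF : mF.IsSymm) (haE : aE.IsSymm)
    (haVE : ∀ m, (aVE m).IsSymm) (rate : ι → ℝ) {N : ℕ} {t : ℕ → ℝ}
    (ht : ∀ n < N, t n < t (n + 1))
    (hU₁ : ∀ n < N, U₁ ∈ affineOnIcc V (t n) (t (n + 1)))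
    (hU₀ : ∀ n < N, U₀ ∈ affineOnIcc V (t n) (t (n + 1)))
    (hZ : ∀ m, ∀ n < N, Z m ∈ affineOnIcc V (t n) (t (n + 1)))
    (momentum : ∀ n < N, ∀ w, ∫ s in t n..t (n + 1),
      (mF ((t (n + 1) - t n)⁻¹ • (U₁ (t (n + 1)) - U₁ (t n))) w + aE (U₀ s) w
        + ∑ m, aVE m (Z m s) w) = 0)
    (elastic : ∀ n < N, ∀ w, ∫ s in t n..t (n + 1),
      aE ((t (n + 1) - t n)⁻¹ • (U₀ (t (n + 1)) - U₀ (t n)) - U₁ s) w = 0)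
    (viscous : ∀ n < N, ∀ m w, ∫ s in t n..t (n + 1),
      aVE m ((t (n + 1) - t n)⁻¹ • (Z m (t (n + 1)) - Z m (t n)) + rate m • Z m s - U₁ s) w = 0)
    {i j : ℕ} (hij : i ≤ j) (hjN : j ≤ N) :
    viscoelasticEnergy mF aE aVE (U₁ (t j)) (U₀ (t j)) (Z · (t j))
        + ∑ m, 2 * rate m * ∑ n ∈ Finset.Ico i j, (t (n + 1) - t n) *
            aVE m (midpoint ℝ (Z m (t n)) (Z m (t (n + 1))))
              (midpoint ℝ (Z m (t n)) (Z m (t (n + 1))))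
      = viscoelasticEnergy mF aE aVE (U₁ (t i)) (U₀ (t i)) (Z · (t i)) := by
  let energy (n : ℕ) := viscoelasticEnergy mF aE aVE (U₁ (t n)) (U₀ (t n)) (Z · (t n))
  have balance : ∀ n ∈ Finset.Ico i j, energy (n + 1) - energy n = _ := fun n hn ↦
    have hnN : n < N := (Finset.mem_Ico.1 hn).2.trans_le hjN
    viscoelasticEnergy_sub_of_midpoint_step hmF haE haVE (sub_ne_zero.2 (ht n hnN).ne')
      (momentum_midpoint_of_integral_eq_zero (ht n hnN) (hU₀ n hnN) (hZ · n hnN)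
        (momentum n hnN _))
      (elastic_midpoint_of_integral_eq_zero (ht n hnN) (hU₁ n hnN) (elastic n hnN _))
      (fun m ↦ viscous_midpoint_of_integral_eq_zero (ht n hnN) (hU₁ n hnN) (hZ m n hnN)
        (viscous n hnN m _))
  have telescoped := Finset.sum_Ico_sub energy hij
  rw [Finset.sum_congr rfl balance, Finset.sum_neg_distrib, Finset.sum_comm] at telescoped
  simp only [Finset.mul_sum]
  linear_combination -telescoped

end Viscoelastic

/-- Discrete energy conservation for the space-time finite element method with
continuous piecewise linear trial functions and piecewise constant test functions
in time (zero data): for node indices `i ≤ j ≤ N`,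
`E(t_j) + ∑_m (2/τ_m) ∑_{n=i+1}^{j} k_n a_VE^m(Ū_n^m, Ū_n^m) = E(t_i)`,
where `Ū_n^m` is the midpoint value `(U_VE^m(t_{n-1}) + U_VE^m(t_n))/2`. -/
theorem viscoelastic_discrete_energy_conservation
    {V : Type*} [NormedAddCommGroup V] [NormedSpace ℝ V]
    (M N : ℕ) (hM : 1 ≤ M) (hN : 1 ≤ N)
    (mF aE : V →L[ℝ] V →L[ℝ] ℝ) (aVE : Fin M → V →L[ℝ] V →L[ℝ] ℝ)
    (hmF_symm : ∀ x y : V, mF x y = mF y x)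
    (haE_symm : ∀ x y : V, aE x y = aE y x)
    (haVE_symm : ∀ (m : Fin M) (x y : V), aVE m x y = aVE m y x)
    (τ : Fin M → ℝ) (hτ : ∀ m, 0 < τ m)
    (t : ℕ → ℝ) (ht0 : t 0 = 0) (htmono : ∀ n < N, t n < t (n + 1))
    (U1 U0 : ℝ → V) (UVE : Fin M → ℝ → V)
    -- `U1`, `U0`, `UVE m` are continuous and affine on each `[t_n, t_{n+1}]`
    (hU1aff : ∀ n < N, ∀ s ∈ Set.Icc (t n) (t (n + 1)),
      U1 s = U1 (t n) + ((s - t n) / (t (n + 1) - t n)) • (U1 (t (n + 1)) - U1 (t n)))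
    (hU0aff : ∀ n < N, ∀ s ∈ Set.Icc (t n) (t (n + 1)),
      U0 s = U0 (t n) + ((s - t n) / (t (n + 1) - t n)) • (U0 (t (n + 1)) - U0 (t n)))
    (hUVEaff : ∀ (m : Fin M), ∀ n < N, ∀ s ∈ Set.Icc (t n) (t (n + 1)),
      UVE m s = UVE m (t n)
        + ((s - t n) / (t (n + 1) - t n)) • (UVE m (t (n + 1)) - UVE m (t n)))
    -- the discrete variational equations (the time derivative of a trial
    -- function on `(t_n, t_{n+1})` is the constant `(W(t_{n+1}) - W(t_n))/k_n`)
    (h1 : ∀ n < N, ∀ w : V,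
      (∫ s in t n..t (n + 1),
        (mF ((t (n + 1) - t n)⁻¹ • (U1 (t (n + 1)) - U1 (t n))) w
          + aE (U0 s) w + ∑ m, aVE m (UVE m s) w)) = 0)
    (h2 : ∀ n < N, ∀ w : V,
      (∫ s in t n..t (n + 1),
        aE ((t (n + 1) - t n)⁻¹ • (U0 (t (n + 1)) - U0 (t n)) - U1 s) w) = 0)
    (h3 : ∀ n < N, ∀ (m : Fin M) (w : V),
      (∫ s in t n..t (n + 1),
        aVE m ((t (n + 1) - t n)⁻¹ • (UVE m (t (n + 1)) - UVE m (t n))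
          + (1 / τ m) • UVE m s - U1 s) w) = 0) :
    ∀ i j : ℕ, i ≤ j → j ≤ N →
      (mF (U1 (t j)) (U1 (t j)) + aE (U0 (t j)) (U0 (t j))
          + ∑ m, aVE m (UVE m (t j)) (UVE m (t j)))
        + ∑ m, (2 / τ m) *
            ∑ n ∈ Finset.Ico i j, (t (n + 1) - t n) *
              aVE m ((2:ℝ)⁻¹ • (UVE m (t n) + UVE m (t (n + 1))))
                ((2:ℝ)⁻¹ • (UVE m (t n) + UVE m (t (n + 1))))
      = mF (U1 (t i)) (U1 (t i)) + aE (U0 (t i)) (U0 (t i))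
          + ∑ m, aVE m (UVE m (t i)) (UVE m (t i)) := by
  intro i j hij hjN
  simpa only [viscoelasticEnergy, ContinuousLinearMap.toBilinForm_apply, midpoint_eq_smul_add,
    invOf_eq_inv, mul_one_div] using viscoelastic_discrete_energy_conservation_general
      (mF := mF.toBilinForm) (aE := aE.toBilinForm) (aVE := fun m ↦ (aVE m).toBilinForm)
      ⟨hmF_symm⟩ ⟨haE_symm⟩ (fun m ↦ ⟨haVE_symm m⟩) (fun m ↦ 1 / τ m) htmono hU1aff hU0aff
      hUVEaff h1 h2 h3 hij hjN
end

section
/- For any node indices i ≤ j: E(t_i) + Σ_{m=1}^M (2/τ_m) Σ_{n=i+1}^{j} k_n · a_VE^m(Φ̄_{VE,n}^m, Φ̄_{VE,n}^m) = E(t_j), where Φ̄_{VE,n}^m = (Φ_VE^m(t_{n−1}) + Φ_VE^m(t_n))/2; i.e., the discrete dual problem conserves energy backward in time. -/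
/-!
With `U = (Φ₁, Φ₀, Φ_VE)`, the dual equations read `∫ (B(U, v) - A(U̇, v)) = 0` on each time step,
where `A` is the symmetric energy form and `B` is the sum of a skew part, coupling `Φ₁` to the other
components, and the relaxation part `∑ₘ τₘ⁻¹ aₘ(Φ_VEᵐ, v_VEᵐ)`. Since `U` is affine on the step,
this is the Crank–Nicolson relation `A(Uₙ₊₁ - Uₙ, v) = k B(Ū, v)`, with `Ū` the average of the two
nodal values. Testing with `2 Ū = Uₙ + Uₙ₊₁` turns the left-hand side into an energy difference and
leaves only the relaxation part on the right; the energy differences telescope.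
-/

open LinearMap (BilinForm)

theorem intervalIntegral_affine_interpolant {E : Type*} [NormedAddCommGroup E] [NormedSpace ℝ E]
    [CompleteSpace E] (a b : ℝ) (x y : E) :
    ∫ s in a..b, (x + ((s - a) / (b - a)) • (y - x)) = (b - a) • (2 : ℝ)⁻¹ • (x + y) := by
  have integral_ratio : ∫ s in a..b, (s - a) / (b - a) = (b - a) / 2 := by
    rw [intervalIntegral.integral_div, intervalIntegral.integral_comp_sub_right (fun s ↦ s),
      integral_id, sub_self, zero_pow two_ne_zero, sub_zero]
    field
  rw [intervalIntegral.integral_add intervalIntegrable_const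
      (Continuous.intervalIntegrable (by fun_prop) _ _),
    intervalIntegral.integral_const, intervalIntegral.integral_smul_const, integral_ratio]
  module

theorem isSymm_apply_sub_add {R M : Type*} [CommRing R] [AddCommGroup M] [Module R M]
    {A : BilinForm R M} (hA : A.IsSymm) (x y : M) :
    A (y - x) (x + y) = A y y - A x x := by
  simp only [map_sub, map_add, LinearMap.sub_apply, hA.eq y x]
  ring

section ContinuousGalerkin

variable {W : Type*} [AddCommGroup W] [Module ℝ W]

/-- The cG(1) time discretisation of `A(u', v) = B(u, v)` on the mesh `t 0, …, t N`: the trial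
function `u` is affine on every cell `[t n, t (n + 1)]` and the test functions are constant on
cells. The derivative of `u` on a cell is encoded as its difference quotient. -/
structure IsCG1Solution (A B : BilinForm ℝ W) (t : ℕ → ℝ) (N : ℕ) (u : ℝ → W) : Prop where
  affine : ∀ n < N, ∀ s ∈ Set.Icc (t n) (t (n + 1)),
    u s = u (t n) + ((s - t n) / (t (n + 1) - t n)) • (u (t (n + 1)) - u (t n))
  galerkin : ∀ n < N, ∀ v : W, ∫ s in t n..t (n + 1),
    (B (u s) v - A ((t (n + 1) - t n)⁻¹ • (u (t (n + 1)) - u (t n))) v) = 0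

namespace IsCG1Solution

variable {A B : BilinForm ℝ W} {t : ℕ → ℝ} {N : ℕ} {u : ℝ → W}

theorem crankNicolson (hu : IsCG1Solution A B t N u) {n : ℕ} (hn : n < N)
    (ht : t n < t (n + 1)) (v : W) :
    A (u (t (n + 1)) - u (t n)) v =
      (t (n + 1) - t n) * B ((2 : ℝ)⁻¹ • (u (t n) + u (t (n + 1)))) v := by
  have hk : t (n + 1) - t n ≠ 0 := sub_ne_zero.mpr ht.ne'
  set slope := (t (n + 1) - t n)⁻¹ • (u (t (n + 1)) - u (t n))
  have integrand_affine : Set.EqOn (fun s ↦ B (u s) v - A slope v)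
      (fun s ↦ (B (u (t n)) v - A slope v) + ((s - t n) / (t (n + 1) - t n)) •
        ((B (u (t (n + 1))) v - A slope v) - (B (u (t n)) v - A slope v)))
      (Set.uIcc (t n) (t (n + 1))) := by
    intro s hs
    rw [Set.uIcc_of_le ht.le] at hs
    simp only [hu.affine n hn s hs, map_add, map_sub, map_smul, LinearMap.add_apply,
      LinearMap.sub_apply, LinearMap.smul_apply, smul_eq_mul]
    ring
  have mean_eq_zero := hu.galerkin n hn v
  rw [intervalIntegral.integral_congr integrand_affine, intervalIntegral_affine_interpolant,
    smul_eq_zero_iff_right hk, smul_eq_zero_iff_right (by norm_num)] at mean_eq_zero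
  have increment : u (t (n + 1)) - u (t n) = (t (n + 1) - t n) • slope :=
    (smul_inv_smul₀ hk _).symm
  rw [increment]
  simp only [map_add, map_smul, LinearMap.add_apply, LinearMap.smul_apply, smul_eq_mul]
  linear_combination (-(t (n + 1) - t n) / 2) * mean_eq_zero

theorem energy_step (hu : IsCG1Solution A B t N u) (hA : A.IsSymm) {n : ℕ} (hn : n < N)
    (ht : t n < t (n + 1)) :
    A (u (t (n + 1))) (u (t (n + 1))) - A (u (t n)) (u (t n)) =
      2 * ((t (n + 1) - t n) * B ((2 : ℝ)⁻¹ • (u (t n) + u (t (n + 1))))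
        ((2 : ℝ)⁻¹ • (u (t n) + u (t (n + 1))))) := by
  rw [← isSymm_apply_sub_add hA, hu.crankNicolson hn ht]
  simp only [map_smul, smul_eq_mul]
  ring

theorem energy_balance (hu : IsCG1Solution A B t N u) (hA : A.IsSymm)
    (ht : ∀ n < N, t n < t (n + 1)) {i j : ℕ} (hij : i ≤ j) (hj : j ≤ N) :
    A (u (t i)) (u (t i)) + 2 * ∑ n ∈ Finset.Ico i j, (t (n + 1) - t n) *
        B ((2 : ℝ)⁻¹ • (u (t n) + u (t (n + 1)))) ((2 : ℝ)⁻¹ • (u (t n) + u (t (n + 1)))) =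
      A (u (t j)) (u (t j)) := by
  have cell_lt {n : ℕ} (hn : n ∈ Finset.Ico i j) : n < N := (Finset.mem_Ico.mp hn).2.trans_le hj
  rw [Finset.mul_sum, ← Finset.sum_congr rfl fun n hn ↦
      hu.energy_step hA (cell_lt hn) (ht n (cell_lt hn)),
    Finset.sum_Ico_sub (fun n ↦ A (u (t n)) (u (t n))) hij, add_sub_cancel]

end IsCG1Solution

end ContinuousGalerkin

section ViscoelasticForms

variable {R V ι : Type*} [CommRing R] [AddCommGroup V] [Module R V] [Fintype ι]

/-- The form `m(x₁, y₁) + a_E(x₀, y₀) + ∑ᵢ a_VEⁱ(x_VEⁱ, y_VEⁱ)` on triples `(x₁, x₀, x_VE)`, whose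
diagonal is the viscoelastic energy. -/
def viscoelasticEnergyForm (mF aE : BilinForm R V) (aVE : ι → BilinForm R V) :
    BilinForm R (V × V × (ι → V)) :=
  mF.comp (.fst R V _) (.fst R V _) +
    aE.comp (.fst R V _ ∘ₗ .snd R V _) (.fst R V _ ∘ₗ .snd R V _) +
    ∑ i, (aVE i).comp (.proj i ∘ₗ .snd R V _ ∘ₗ .snd R V _)
      (.proj i ∘ₗ .snd R V _ ∘ₗ .snd R V _)

/-- The form on triples `(x₁, x₀, x_VE)` collecting the terms of the viscoelastic dual problem
without time derivative. The parameter `γ i` is the relaxation rate `1 / τ i`. -/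
def viscoelasticDualForm (aE : BilinForm R V) (aVE : ι → BilinForm R V) (γ : ι → R) :
    BilinForm R (V × V × (ι → V)) :=
  aE.comp (.fst R V _ ∘ₗ .snd R V _) (.fst R V _) -
    aE.comp (.fst R V _) (.fst R V _ ∘ₗ .snd R V _) +
    ∑ i, ((aVE i).comp (.proj i ∘ₗ .snd R V _ ∘ₗ .snd R V _) (.fst R V _) -
      (aVE i).comp (.fst R V _) (.proj i ∘ₗ .snd R V _ ∘ₗ .snd R V _) +
      γ i • (aVE i).comp (.proj i ∘ₗ .snd R V _ ∘ₗ .snd R V _)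
        (.proj i ∘ₗ .snd R V _ ∘ₗ .snd R V _))

variable {mF aE : BilinForm R V} {aVE : ι → BilinForm R V} {γ : ι → R}

theorem viscoelasticEnergyForm_apply (x y : V × V × (ι → V)) :
    viscoelasticEnergyForm mF aE aVE x y =
      mF x.1 y.1 + aE x.2.1 y.2.1 + ∑ i, aVE i (x.2.2 i) (y.2.2 i) := by
  simp [viscoelasticEnergyForm]

theorem viscoelasticDualForm_apply (x y : V × V × (ι → V)) :
    viscoelasticDualForm aE aVE γ x y =
      aE x.2.1 y.1 - aE x.1 y.2.1 +
        ∑ i, (aVE i (x.2.2 i) y.1 - aVE i x.1 (y.2.2 i) + γ i * aVE i (x.2.2 i) (y.2.2 i)) := by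
  simp [viscoelasticDualForm]

theorem isSymm_viscoelasticEnergyForm (hmF : mF.IsSymm) (haE : aE.IsSymm)
    (haVE : ∀ i, (aVE i).IsSymm) : (viscoelasticEnergyForm mF aE aVE).IsSymm where
  eq x y := by
    simp only [viscoelasticEnergyForm_apply, hmF.eq x.1, haE.eq x.2.1,
      fun i ↦ (haVE i).eq (x.2.2 i)]

theorem viscoelasticDualForm_self (haE : aE.IsSymm) (haVE : ∀ i, (aVE i).IsSymm)
    (x : V × V × (ι → V)) :
    viscoelasticDualForm aE aVE γ x x = ∑ i, γ i * aVE i (x.2.2 i) (x.2.2 i) := by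
  simp only [viscoelasticDualForm_apply, haE.eq x.1, fun i ↦ (haVE i).eq x.1, sub_self, zero_add]

end ViscoelasticForms

theorem viscoelastic_dual_discrete_energy_conservation_general
    {V ι : Type*} [AddCommGroup V] [Module ℝ V] [Fintype ι] (N : ℕ)
    {mF aE : BilinForm ℝ V} {aVE : ι → BilinForm ℝ V}
    (hmF : mF.IsSymm) (haE : aE.IsSymm) (haVE : ∀ m, (aVE m).IsSymm) (γ : ι → ℝ)
    {t : ℕ → ℝ} (ht : ∀ n < N, t n < t (n + 1)) {Φ1 Φ0 : ℝ → V} {ΦVE : ι → ℝ → V}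
    (hΦ1 : ∀ n < N, ∀ s ∈ Set.Icc (t n) (t (n + 1)),
      Φ1 s = Φ1 (t n) + ((s - t n) / (t (n + 1) - t n)) • (Φ1 (t (n + 1)) - Φ1 (t n)))
    (hΦ0 : ∀ n < N, ∀ s ∈ Set.Icc (t n) (t (n + 1)),
      Φ0 s = Φ0 (t n) + ((s - t n) / (t (n + 1) - t n)) • (Φ0 (t (n + 1)) - Φ0 (t n)))
    (hΦVE : ∀ m, ∀ n < N, ∀ s ∈ Set.Icc (t n) (t (n + 1)),
      ΦVE m s = ΦVE m (t n)
        + ((s - t n) / (t (n + 1) - t n)) • (ΦVE m (t (n + 1)) - ΦVE m (t n)))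
    (hdual : ∀ n < N, ∀ (v1 v0 : V) (vVE : ι → V),
      (∫ s in t n..t (n + 1),
        (-(mF ((t (n + 1) - t n)⁻¹ • (Φ1 (t (n + 1)) - Φ1 (t n))) v1)
          - aE ((t (n + 1) - t n)⁻¹ • (Φ0 (t (n + 1)) - Φ0 (t n))) v0
          - ∑ m, aVE m ((t (n + 1) - t n)⁻¹ • (ΦVE m (t (n + 1)) - ΦVE m (t n))) (vVE m)
          + aE (Φ0 s) v1 - aE (Φ1 s) v0
          + ∑ m, (aVE m (ΦVE m s) v1 - aVE m (Φ1 s) (vVE m)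
              + γ m * aVE m (ΦVE m s) (vVE m)))) = 0)
    {i j : ℕ} (hij : i ≤ j) (hj : j ≤ N) :
    (mF (Φ1 (t i)) (Φ1 (t i)) + aE (Φ0 (t i)) (Φ0 (t i))
        + ∑ m, aVE m (ΦVE m (t i)) (ΦVE m (t i)))
      + ∑ m, 2 * γ m *
          ∑ n ∈ Finset.Ico i j, (t (n + 1) - t n) *
            aVE m ((2 : ℝ)⁻¹ • (ΦVE m (t n) + ΦVE m (t (n + 1))))
              ((2 : ℝ)⁻¹ • (ΦVE m (t n) + ΦVE m (t (n + 1))))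
    = mF (Φ1 (t j)) (Φ1 (t j)) + aE (Φ0 (t j)) (Φ0 (t j))
        + ∑ m, aVE m (ΦVE m (t j)) (ΦVE m (t j)) := by
  have solution : IsCG1Solution (viscoelasticEnergyForm mF aE aVE) (viscoelasticDualForm aE aVE γ)
      t N (fun s ↦ (Φ1 s, Φ0 s, fun m ↦ ΦVE m s)) :=
    { affine := fun n hn s hs ↦ Prod.ext (hΦ1 n hn s hs) <| Prod.ext (hΦ0 n hn s hs) <|
        funext fun m ↦ hΦVE m n hn s hs
      galerkin := fun n hn ⟨v1, v0, vVE⟩ ↦ by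
        rw [← hdual n hn v1 v0 vVE]
        congr! 2 with s
        rw [viscoelasticDualForm_apply, viscoelasticEnergyForm_apply]
        simp only [Prod.fst_sub, Prod.snd_sub, Prod.smul_fst, Prod.smul_snd, Pi.sub_apply,
          Pi.smul_apply]
        ring }
  have balance := solution.energy_balance (isSymm_viscoelasticEnergyForm hmF haE haVE) ht hij hj
  simp only [viscoelasticDualForm_self haE haVE, viscoelasticEnergyForm_apply] at balance
  rw [← balance]
  congr 1
  simp only [Finset.mul_sum]
  rw [Finset.sum_comm]
  refine Finset.sum_congr rfl fun n _ ↦ Finset.sum_congr rfl fun m _ ↦ ?_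
  simp only [Prod.snd_add, Prod.smul_snd, Pi.add_apply, Pi.smul_apply]
  ring

/-- The discrete dual problem conserves energy backward in time: for node
indices `i ≤ j ≤ N`,
`E(t_i) + ∑_m (2/τ_m) ∑_{n=i+1}^{j} k_n a_VE^m(Φ̄_n^m, Φ̄_n^m) = E(t_j)`,
where `Φ̄_n^m = (Φ_VE^m(t_{n-1}) + Φ_VE^m(t_n))/2`. -/
theorem viscoelastic_dual_discrete_energy_conservation
    {V : Type*} [NormedAddCommGroup V] [NormedSpace ℝ V]
    (M N : ℕ) (hM : 1 ≤ M) (hN : 1 ≤ N)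
    (mF aE : V →L[ℝ] V →L[ℝ] ℝ) (aVE : Fin M → V →L[ℝ] V →L[ℝ] ℝ)
    (hmF_symm : ∀ x y : V, mF x y = mF y x)
    (haE_symm : ∀ x y : V, aE x y = aE y x)
    (haVE_symm : ∀ (m : Fin M) (x y : V), aVE m x y = aVE m y x)
    (τ : Fin M → ℝ) (hτ : ∀ m, 0 < τ m)
    (t : ℕ → ℝ) (ht0 : t 0 = 0) (htmono : ∀ n < N, t n < t (n + 1))
    (Φ1 Φ0 : ℝ → V) (ΦVE : Fin M → ℝ → V)
    -- `Φ1`, `Φ0`, `ΦVE m` are continuous and affine on each `[t_n, t_{n+1}]`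
    (hΦ1aff : ∀ n < N, ∀ s ∈ Set.Icc (t n) (t (n + 1)),
      Φ1 s = Φ1 (t n) + ((s - t n) / (t (n + 1) - t n)) • (Φ1 (t (n + 1)) - Φ1 (t n)))
    (hΦ0aff : ∀ n < N, ∀ s ∈ Set.Icc (t n) (t (n + 1)),
      Φ0 s = Φ0 (t n) + ((s - t n) / (t (n + 1) - t n)) • (Φ0 (t (n + 1)) - Φ0 (t n)))
    (hΦVEaff : ∀ (m : Fin M), ∀ n < N, ∀ s ∈ Set.Icc (t n) (t (n + 1)),
      ΦVE m s = ΦVE m (t n)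
        + ((s - t n) / (t (n + 1) - t n)) • (ΦVE m (t (n + 1)) - ΦVE m (t n)))
    -- the discrete dual equations (the time derivative of a trial function on
    -- `(t_n, t_{n+1})` is the constant `(W(t_{n+1}) - W(t_n))/k_n`)
    (hdual : ∀ n < N, ∀ (v1 v0 : V) (vVE : Fin M → V),
      (∫ s in t n..t (n + 1),
        (-(mF ((t (n + 1) - t n)⁻¹ • (Φ1 (t (n + 1)) - Φ1 (t n))) v1)
          - aE ((t (n + 1) - t n)⁻¹ • (Φ0 (t (n + 1)) - Φ0 (t n))) v0
          - ∑ m, aVE m ((t (n + 1) - t n)⁻¹ • (ΦVE m (t (n + 1)) - ΦVE m (t n))) (vVE m)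
          + aE (Φ0 s) v1 - aE (Φ1 s) v0
          + ∑ m, (aVE m (ΦVE m s) v1 - aVE m (Φ1 s) (vVE m)
              + (1 / τ m) * aVE m (ΦVE m s) (vVE m)))) = 0) :
    ∀ i j : ℕ, i ≤ j → j ≤ N →
      (mF (Φ1 (t i)) (Φ1 (t i)) + aE (Φ0 (t i)) (Φ0 (t i))
          + ∑ m, aVE m (ΦVE m (t i)) (ΦVE m (t i)))
        + ∑ m, (2 / τ m) *
            ∑ n ∈ Finset.Ico i j, (t (n + 1) - t n) *
              aVE m ((2:ℝ)⁻¹ • (ΦVE m (t n) + ΦVE m (t (n + 1))))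
                ((2:ℝ)⁻¹ • (ΦVE m (t n) + ΦVE m (t (n + 1))))
      = mF (Φ1 (t j)) (Φ1 (t j)) + aE (Φ0 (t j)) (Φ0 (t j))
          + ∑ m, aVE m (ΦVE m (t j)) (ΦVE m (t j)) := by
  intro i j hij hj
  simp only [← mul_one_div (2 : ℝ)]
  exact viscoelastic_dual_discrete_energy_conservation_general N (mF := mF.toBilinForm)
    (aE := aE.toBilinForm) (aVE := fun m ↦ (aVE m).toBilinForm) ⟨hmF_symm⟩ ⟨haE_symm⟩
    (fun m ↦ ⟨haVE_symm m⟩) (fun m ↦ 1 / τ m) htmono hΦ1aff hΦ0aff hΦVEaff hdual hij hj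
end

section
/- The error representation formula holds: A(η(T), Ψ) = A(η(0), Φ(0)) − ∫₀ᵀ [ A(ρ̇(t), P₀Φ(t)) + B(ρ(t), P₀Φ(t)) − G(t)(P₀Φ(t)) ] dt. -/
/-!
On a single interval `[a, b]` write `Φ̄` for the average of the affine function `Φ`, which is its
midpoint value, and `η̄` for that of `η = Ũ - U`. Testing the Galerkin relation with `Φ̄` replaces
`ρ = u - Ũ` by `-η`, so the integral of the residual is
`-(A (η b - η a) Φ̄ + (b - a) B η̄ Φ̄)`. Testing the dual problem with `η̄` turns
`(b - a) B η̄ Φ̄` into `A η̄ (Φ b - Φ a)`, and the discrete product rule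
`A (η b - η a) Φ̄ + A η̄ (Φ b - Φ a) = A (η b) (Φ b) - A (η a) (Φ a)` makes the sum over the
intervals telescope.
-/

open Set MeasureTheory

/-- `f` is affine on `[a, b]`, expressed as agreement with the linear interpolant of its endpoint
values. For `a = b` the condition is vacuous, the quotient being `0 / 0 = 0`. -/
def AffineOnIcc {E : Type*} [AddCommGroup E] [Module ℝ E] (f : ℝ → E) (a b : ℝ) : Prop :=
  ∀ s ∈ Icc a b, f s = f a + ((s - a) / (b - a)) • (f b - f a)

namespace AffineOnIcc

section Module

variable {E F : Type*} [AddCommGroup E] [Module ℝ E] [AddCommGroup F] [Module ℝ F]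
  {f g : ℝ → E} {a b : ℝ}

theorem sub (hf : AffineOnIcc f a b) (hg : AffineOnIcc g a b) :
    AffineOnIcc (fun s => f s - g s) a b := by
  intro s hs
  simp only [hf s hs, hg s hs]
  module

theorem linearMap_comp (hf : AffineOnIcc f a b) (L : E →ₗ[ℝ] F) :
    AffineOnIcc (fun s => L (f s)) a b := by
  intro s hs
  simp only [hf s hs, map_add, map_smul, map_sub]

end Module

section Integral

variable {E F : Type*} [NormedAddCommGroup E] [NormedSpace ℝ E] {f : ℝ → E} {a b : ℝ}

theorem continuousOn (hf : AffineOnIcc f a b) : ContinuousOn f (Icc a b) :=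
  ContinuousOn.congr (by fun_prop) hf

theorem intervalIntegrable (hf : AffineOnIcc f a b) (hab : a ≤ b) :
    IntervalIntegrable f volume a b :=
  hf.continuousOn.intervalIntegrable_of_Icc hab

theorem integral_eq_smul_midpoint [CompleteSpace E] (hf : AffineOnIcc f a b) (hab : a ≤ b) :
    ∫ s in a..b, f s = (b - a) • midpoint ℝ (f a) (f b) := by
  obtain rfl | hlt := hab.eq_or_lt
  · simp
  have hk : b - a ≠ 0 := (sub_pos.2 hlt).ne'
  have integral_weight : ∫ s in a..b, (s - a) / (b - a) = (b - a) / 2 := by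
    rw [intervalIntegral.integral_div, intervalIntegral.integral_comp_sub_right (fun s => s),
      integral_id]
    field_simp
    ring
  calc ∫ s in a..b, f s
      = ∫ s in a..b, (f a + ((s - a) / (b - a)) • (f b - f a)) :=
        intervalIntegral.integral_congr fun s hs => hf s (uIcc_of_le hab ▸ hs)
    _ = (b - a) • f a + ((b - a) / 2) • (f b - f a) := by
        rw [intervalIntegral.integral_add intervalIntegrable_const
            (Continuous.intervalIntegrable (by fun_prop) a b),
          intervalIntegral.integral_const, intervalIntegral.integral_smul_const, integral_weight]
    _ = (b - a) • midpoint ℝ (f a) (f b) := by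
        rw [midpoint_eq_smul_add, invOf_eq_inv]
        module

theorem intervalAverage_eq_midpoint [CompleteSpace E] (hf : AffineOnIcc f a b) (hab : a < b) :
    ⨍ s in a..b, f s = midpoint ℝ (f a) (f b) := by
  rw [interval_average_eq, hf.integral_eq_smul_midpoint hab.le,
    inv_smul_smul₀ (sub_pos.2 hab).ne']

end Integral

theorem integral_const_add_linearMap {E F : Type*} [AddCommGroup E] [Module ℝ E]
    [NormedAddCommGroup F] [NormedSpace ℝ F] [CompleteSpace F] {f : ℝ → E} {a b : ℝ}
    (hf : AffineOnIcc f a b) (hab : a ≤ b) (c : F) (L : E →ₗ[ℝ] F) :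
    ∫ s in a..b, (c + L (f s)) = (b - a) • (c + L (midpoint ℝ (f a) (f b))) := by
  have hLf := hf.linearMap_comp L
  rw [intervalIntegral.integral_add intervalIntegrable_const (hLf.intervalIntegrable hab),
    intervalIntegral.integral_const, hLf.integral_eq_smul_midpoint hab, smul_add]
  congr 2
  exact (L.toAffineMap.map_midpoint (f a) (f b)).symm

end AffineOnIcc

theorem bilin_sub_midpoint_add_bilin_midpoint_sub {X Y F : Type*} [AddCommGroup X] [Module ℝ X]
    [AddCommGroup Y] [Module ℝ Y] [AddCommGroup F] [Module ℝ F] (A : X →ₗ[ℝ] Y →ₗ[ℝ] F)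
    (x₀ x₁ : X) (y₀ y₁ : Y) :
    A (x₁ - x₀) (midpoint ℝ y₀ y₁) + A (midpoint ℝ x₀ x₁) (y₁ - y₀) = A x₁ y₁ - A x₀ y₀ := by
  simp only [midpoint_eq_smul_add, invOf_eq_inv, map_sub, map_add, map_smul, LinearMap.sub_apply,
    LinearMap.add_apply, LinearMap.smul_apply]
  module

theorem integral_bilin_slope_add_bilin_eq_sub_of_dual {X Y F : Type*} [AddCommGroup X] [Module ℝ X]
    [AddCommGroup Y] [Module ℝ Y] [NormedAddCommGroup F] [NormedSpace ℝ F] [CompleteSpace F]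
    (A B : X →ₗ[ℝ] Y →ₗ[ℝ] F) {η : ℝ → X} {Φ : ℝ → Y} {a b : ℝ} (hab : a ≤ b)
    (hη : AffineOnIcc η a b) (hΦ : AffineOnIcc Φ a b)
    (hdual : ∫ s in a..b, (-(A (midpoint ℝ (η a) (η b)) (slope Φ a b))
      + B (midpoint ℝ (η a) (η b)) (Φ s)) = 0) :
    ∫ s in a..b, (A (slope η a b) (midpoint ℝ (Φ a) (Φ b)) + B (η s) (midpoint ℝ (Φ a) (Φ b)))
      = A (η b) (Φ b) - A (η a) (Φ a) := by
  set η_mid := midpoint ℝ (η a) (η b)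
  set Φ_mid := midpoint ℝ (Φ a) (Φ b)
  have dual_eq : (b - a) • B η_mid Φ_mid = A η_mid (Φ b - Φ a) := by
    rw [hΦ.integral_const_add_linearMap hab, smul_add, smul_neg, ← map_smul, sub_smul_slope,
      neg_add_eq_zero] at hdual
    exact hdual.symm
  calc ∫ s in a..b, (A (slope η a b) Φ_mid + B (η s) Φ_mid)
      = (b - a) • (A (slope η a b) Φ_mid + B η_mid Φ_mid) :=
        hη.integral_const_add_linearMap hab _ (B.flip Φ_mid)
    _ = A (η b - η a) Φ_mid + A η_mid (Φ b - Φ a) := by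
        rw [smul_add, dual_eq, ← LinearMap.smul_apply, ← map_smul, sub_smul_slope, vsub_eq_sub]
    _ = A (η b) (Φ b) - A (η a) (Φ a) := bilin_sub_midpoint_add_bilin_midpoint_sub A _ _ _ _

section Residual

variable {E F : Type*} [NormedAddCommGroup E] [NormedSpace ℝ E] [NormedAddCommGroup F]
  [NormedSpace ℝ F] {μ : Measure ℝ} {a b : ℝ}

theorem intervalIntegrable_clm_comp (L : E →L[ℝ] F) {f : ℝ → E}
    (hf : IntervalIntegrable f μ a b) : IntervalIntegrable (fun s => L (f s)) μ a b :=
  ⟨L.integrable_comp hf.1, L.integrable_comp hf.2⟩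

theorem integral_residual_eq_neg_of_galerkin (α β : E →L[ℝ] F) {u u' U U' W W' : ℝ → E}
    {g : ℝ → F} (hu : IntervalIntegrable u μ a b) (hu' : IntervalIntegrable u' μ a b)
    (hU : IntervalIntegrable U μ a b) (hU' : IntervalIntegrable U' μ a b)
    (hW : IntervalIntegrable W μ a b) (hW' : IntervalIntegrable W' μ a b)
    (hg : IntervalIntegrable g μ a b)
    (hGalerkin : ∫ s in a..b, (α (u' s - U' s) + β (u s - U s)) ∂μ = ∫ s in a..b, g s ∂μ) :
    ∫ s in a..b, (α (u' s - W' s) + β (u s - W s) - g s) ∂μ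
      = -∫ s in a..b, (α (W' s - U' s) + β (W s - U s)) ∂μ := by
  have split (s : ℝ) : α (u' s - W' s) + β (u s - W s) - g s
      = α (u' s - U' s) + β (u s - U s) - g s - (α (W' s - U' s) + β (W s - U s)) := by
    simp only [map_sub]
    abel
  have h_error := (intervalIntegrable_clm_comp α (hu'.sub hU')).add
    (intervalIntegrable_clm_comp β (hu.sub hU))
  have h_discrete := (intervalIntegrable_clm_comp α (hW'.sub hU')).add
    (intervalIntegrable_clm_comp β (hW.sub hU))
  simp_rw [split]
  rw [intervalIntegral.integral_sub (h_error.sub hg) h_discrete,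
    intervalIntegral.integral_sub h_error hg, hGalerkin, sub_self, zero_sub]

end Residual

theorem monotoneOn_Iic_of_le_succ {α : Type*} [Preorder α] {t : ℕ → α} {N : ℕ}
    (ht : ∀ n < N, t n ≤ t (n + 1)) : MonotoneOn t (Iic N) :=
  monotoneOn_of_le_succ ordConnected_Iic fun n _ _ hn => ht n hn

section PetrovGalerkin

variable {X Y F : Type*} [NormedAddCommGroup X] [NormedSpace ℝ X]
  [NormedAddCommGroup Y] [NormedSpace ℝ Y] [CompleteSpace Y]
  [NormedAddCommGroup F] [NormedSpace ℝ F] [CompleteSpace F]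

theorem integral_residual_eq_sub_of_galerkin_of_dual (A B : X →L[ℝ] Y →L[ℝ] F) {a b : ℝ}
    (hab : a < b) {G : ℝ → Y →L[ℝ] F} {u u' Ut U : ℝ → X} {Φ : ℝ → Y}
    (hG : IntervalIntegrable (fun s => G s (midpoint ℝ (Φ a) (Φ b))) volume a b)
    (hu : IntervalIntegrable u volume a b) (hu' : IntervalIntegrable u' volume a b)
    (hUt : AffineOnIcc Ut a b) (hU : AffineOnIcc U a b) (hΦ : AffineOnIcc Φ a b)
    (hGalerkin : ∫ s in a..b, (A (u' s - slope U a b) (midpoint ℝ (Φ a) (Φ b))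
      + B (u s - U s) (midpoint ℝ (Φ a) (Φ b))) = ∫ s in a..b, G s (midpoint ℝ (Φ a) (Φ b)))
    (hdual : ∫ s in a..b, (-(A (midpoint ℝ (Ut a - U a) (Ut b - U b)) (slope Φ a b))
      + B (midpoint ℝ (Ut a - U a) (Ut b - U b)) (Φ s)) = 0) :
    ∫ s in a..b, (A (u' s - slope Ut a b) (⨍ r in a..b, Φ r) + B (u s - Ut s) (⨍ r in a..b, Φ r)
      - G s (⨍ r in a..b, Φ r)) = A (Ut a - U a) (Φ a) - A (Ut b - U b) (Φ b) := by
  rw [hΦ.intervalAverage_eq_midpoint hab]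
  set Φ_mid := midpoint ℝ (Φ a) (Φ b)
  have slope_error : slope Ut a b - slope U a b = slope (fun s => Ut s - U s) a b := by
    simp only [slope, vsub_eq_sub]
    module
  calc ∫ s in a..b, (A (u' s - slope Ut a b) Φ_mid + B (u s - Ut s) Φ_mid - G s Φ_mid)
      = -∫ s in a..b, (A (slope Ut a b - slope U a b) Φ_mid + B (Ut s - U s) Φ_mid) :=
        integral_residual_eq_neg_of_galerkin (A.flip Φ_mid) (B.flip Φ_mid) hu hu'
          (hU.intervalIntegrable hab.le) intervalIntegrable_const
          (hUt.intervalIntegrable hab.le) intervalIntegrable_const hG hGalerkin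
    _ = -(A (Ut b - U b) (Φ b) - A (Ut a - U a) (Φ a)) := by
        rw [slope_error]
        exact congrArg Neg.neg <| integral_bilin_slope_add_bilin_eq_sub_of_dual
          A.toLinearMap₁₂ B.toLinearMap₁₂ hab.le (hUt.sub hU) hΦ hdual
    _ = A (Ut a - U a) (Φ a) - A (Ut b - U b) (Φ b) := neg_sub _ _

theorem viscoelastic_error_representation_general
    (Xh : Submodule ℝ X) (Yh : Submodule ℝ Y) (A B : X →L[ℝ] Y →L[ℝ] F)
    {N : ℕ} {t : ℕ → ℝ} (ht : ∀ n < N, t n < t (n + 1))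
    {G : ℝ → Y →L[ℝ] F}
    (hG : ∀ w ∈ Yh, IntervalIntegrable (fun s => G s w) volume (t 0) (t N))
    {u u' : ℝ → X}
    (hu : ∀ s ∈ Icc (t 0) (t N), HasDerivWithinAt u (u' s) (Icc (t 0) (t N)) s)
    (hu' : IntervalIntegrable u' volume (t 0) (t N))
    {Ut U : ℝ → X} {Φ : ℝ → Y}
    (hUt_mem : ∀ n ≤ N, Ut (t n) ∈ Xh) (hU_mem : ∀ n ≤ N, U (t n) ∈ Xh)
    (hΦ_mem : ∀ n ≤ N, Φ (t n) ∈ Yh)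
    (hUt : ∀ n < N, AffineOnIcc Ut (t n) (t (n + 1)))
    (hU : ∀ n < N, AffineOnIcc U (t n) (t (n + 1)))
    (hΦ : ∀ n < N, AffineOnIcc Φ (t n) (t (n + 1)))
    (hGalerkin : ∀ n < N, ∀ w ∈ Yh,
      ∫ s in t n..t (n + 1), (A (u' s - slope U (t n) (t (n + 1))) w + B (u s - U s) w)
        = ∫ s in t n..t (n + 1), G s w)
    (hdual : ∀ n < N, ∀ v ∈ Xh,
      ∫ s in t n..t (n + 1), (-(A v (slope Φ (t n) (t (n + 1)))) + B v (Φ s)) = 0) :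
    A (Ut (t N) - U (t N)) (Φ (t N))
      = A (Ut (t 0) - U (t 0)) (Φ (t 0))
        - ∑ n ∈ Finset.range N, ∫ s in t n..t (n + 1),
            (A (u' s - slope Ut (t n) (t (n + 1))) (⨍ r in t n..t (n + 1), Φ r)
              + B (u s - Ut s) (⨍ r in t n..t (n + 1), Φ r)
              - G s (⨍ r in t n..t (n + 1), Φ r)) := by
  have hη_mem (n : ℕ) (hn : n ≤ N) : Ut (t n) - U (t n) ∈ Xh :=
    Xh.sub_mem (hUt_mem n hn) (hU_mem n hn)
  have hu_cont : ContinuousOn u (Icc (t 0) (t N)) := fun s hs => (hu s hs).continuousWithinAt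
  have t_mono : MonotoneOn t (Iic N) := monotoneOn_Iic_of_le_succ fun n hn => (ht n hn).le
  have interval_identity : ∀ n ∈ Finset.range N, ∫ s in t n..t (n + 1),
      (A (u' s - slope Ut (t n) (t (n + 1))) (⨍ r in t n..t (n + 1), Φ r)
        + B (u s - Ut s) (⨍ r in t n..t (n + 1), Φ r) - G s (⨍ r in t n..t (n + 1), Φ r))
      = A (Ut (t n) - U (t n)) (Φ (t n))
        - A (Ut (t (n + 1)) - U (t (n + 1))) (Φ (t (n + 1))) := by
    intro n hn
    rw [Finset.mem_range] at hn
    have h_sub : Icc (t n) (t (n + 1)) ⊆ Icc (t 0) (t N) :=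
      Icc_subset_Icc (t_mono N.zero_le hn.le n.zero_le) (t_mono hn self_mem_Iic hn)
    have h_uIcc : uIcc (t n) (t (n + 1)) ⊆ uIcc (t 0) (t N) := by
      rw [uIcc_of_le (ht n hn).le]
      exact h_sub.trans Icc_subset_uIcc
    have hw := Yh.convex.midpoint_mem (hΦ_mem n hn.le) (hΦ_mem (n + 1) hn)
    exact integral_residual_eq_sub_of_galerkin_of_dual A B (ht n hn) ((hG _ hw).mono_set h_uIcc)
      ((hu_cont.mono h_sub).intervalIntegrable_of_Icc (ht n hn).le) (hu'.mono_set h_uIcc)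
      (hUt n hn) (hU n hn) (hΦ n hn) (hGalerkin n hn _ hw)
      (hdual n hn _ (Xh.convex.midpoint_mem (hη_mem n hn.le) (hη_mem (n + 1) hn)))
  rw [Finset.sum_congr rfl interval_identity,
    Finset.sum_range_sub' (fun n => A (Ut (t n) - U (t n)) (Φ (t n))), sub_sub_cancel]

end PetrovGalerkin

/-- Error representation formula via the discrete dual problem:
`A(η(T), Ψ) = A(η(0), Φ(0)) - ∫₀ᵀ [A(ρ̇, P₀Φ) + B(ρ, P₀Φ) - G(t)(P₀Φ)] dt`,
where `ρ = u - Ũ`, `η = Ũ - U`, `Ψ = Φ(T)`, and `P₀Φ` is the piecewise constant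
(in time) interval average of `Φ`.  Here `u` solves the continuous problem in
the sense of the approximate Galerkin orthogonality, `Ũ` is an arbitrary
`V_h`-valued piecewise linear (in time) interpolant, `U` is the finite element
solution, and `Φ` solves the discrete dual problem. -/
theorem viscoelastic_error_representation
    {V : Type*} [NormedAddCommGroup V] [NormedSpace ℝ V] [CompleteSpace V]
    (Vh : Submodule ℝ V)
    (A B : V →L[ℝ] V →L[ℝ] ℝ)
    (N : ℕ) (hN : 1 ≤ N)
    (t : ℕ → ℝ) (ht0 : t 0 = 0) (htmono : ∀ n < N, t n < t (n + 1))
    (T : ℝ) (hT : t N = T)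
    (G : ℝ → V →L[ℝ] ℝ) (hG : ContinuousOn G (Set.Icc 0 T))
    (u u' : ℝ → V) (hu : ∀ s, HasDerivAt u (u' s) s) (hu' : Continuous u')
    (Ut U Φ : ℝ → V)
    (hUt_mem : ∀ s, Ut s ∈ Vh) (hU_mem : ∀ s, U s ∈ Vh) (hΦ_mem : ∀ s, Φ s ∈ Vh)
    -- `Ũ`, `U`, `Φ` are continuous and affine on each `[t_n, t_{n+1}]`
    (hUt_aff : ∀ n < N, ∀ s ∈ Set.Icc (t n) (t (n + 1)),
      Ut s = Ut (t n) + ((s - t n) / (t (n + 1) - t n)) • (Ut (t (n + 1)) - Ut (t n)))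
    (hU_aff : ∀ n < N, ∀ s ∈ Set.Icc (t n) (t (n + 1)),
      U s = U (t n) + ((s - t n) / (t (n + 1) - t n)) • (U (t (n + 1)) - U (t n)))
    (hΦ_aff : ∀ n < N, ∀ s ∈ Set.Icc (t n) (t (n + 1)),
      Φ s = Φ (t n) + ((s - t n) / (t (n + 1) - t n)) • (Φ (t (n + 1)) - Φ (t n)))
    -- approximate Galerkin orthogonality (the derivative of `U` on
    -- `(t_n, t_{n+1})` is the constant `(U(t_{n+1}) - U(t_n))/k_n`)
    (hGalerkin : ∀ n < N, ∀ w ∈ Vh,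
      (∫ s in t n..t (n + 1),
        (A (u' s - (t (n + 1) - t n)⁻¹ • (U (t (n + 1)) - U (t n))) w
          + B (u s - U s) w))
      = ∫ s in t n..t (n + 1), G s w)
    -- discrete dual problem
    (hdual : ∀ n < N, ∀ w ∈ Vh,
      (∫ s in t n..t (n + 1),
        (-(A w ((t (n + 1) - t n)⁻¹ • (Φ (t (n + 1)) - Φ (t n)))) + B w (Φ s))) = 0) :
    A (Ut T - U T) (Φ T)
      = A (Ut 0 - U 0) (Φ 0)
        - ∑ n ∈ Finset.range N,
            ∫ s in t n..t (n + 1),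
              (A (u' s - (t (n + 1) - t n)⁻¹ • (Ut (t (n + 1)) - Ut (t n)))
                  ((t (n + 1) - t n)⁻¹ • ∫ r in t n..t (n + 1), Φ r)
                + B (u s - Ut s)
                  ((t (n + 1) - t n)⁻¹ • ∫ r in t n..t (n + 1), Φ r)
                - G s ((t (n + 1) - t n)⁻¹ • ∫ r in t n..t (n + 1), Φ r)) := by
  subst hT
  rw [← ht0] at hG ⊢
  have t_le : t 0 ≤ t N :=
    monotoneOn_Iic_of_le_succ (fun n hn => (htmono n hn).le) N.zero_le self_mem_Iic N.zero_le
  simpa only [slope, vsub_eq_sub, interval_average_eq] using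
    viscoelastic_error_representation_general Vh Vh A B htmono
      (fun w _ => (hG.clm_apply continuousOn_const).intervalIntegrable_of_Icc t_le)
      (fun s _ => (hu s).hasDerivWithinAt) (hu'.intervalIntegrable _ _)
      (fun n _ => hUt_mem (t n)) (fun n _ => hU_mem (t n)) (fun n _ => hΦ_mem (t n))
      hUt_aff hU_aff hΦ_aff hGalerkin hdual
end

section
/- The identity ⟨BΦ(t_j), A⁻¹BΦ(t_j)⟩ − 2 Σ_{n=1}^{L} k_n·⟨BΦ̇_n, Φ̇_n⟩ = ⟨BΦ(t_i), A⁻¹BΦ(t_i)⟩ holds, where Φ̇_n denotes the (constant) derivative of Φ on the interval J_n; this is the conservation identity underlying the L² stability estimate for the discrete dual problem. -/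
open scoped RealInnerProductSpace

/-!
On an interval of length `k` where `Φ` is affine, the mean of `Φ` is the midpoint of its endpoint
values, so the dual equation reads `A Φ̇ = B Φ_mid`. Since `A⁻¹` is symmetric, the energy
`⟪B Φ, A⁻¹ (B Φ)⟫` changes across the interval by
`2 ⟪B (k Φ̇), A⁻¹ (B Φ_mid)⟫ = 2 k ⟪B Φ̇, Φ̇⟫`, and these increments telescope.
-/

theorem integral_lineMap_zero_one {E : Type*} [NormedAddCommGroup E] [NormedSpace ℝ E]
    [CompleteSpace E] (a b : E) :
    ∫ t in (0 : ℝ)..1, AffineMap.lineMap a b t = midpoint ℝ a b := by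
  simp only [AffineMap.lineMap_apply_module']
  rw [intervalIntegral.integral_add (Continuous.intervalIntegrable (by fun_prop) _ _) (by simp),
    intervalIntegral.integral_smul_const, integral_id, intervalIntegral.integral_const]
  simp [midpoint, AffineMap.lineMap_apply_module']

theorem integral_lineMap_sub_div_sub {E : Type*} [NormedAddCommGroup E] [NormedSpace ℝ E]
    [CompleteSpace E] (a b : E) (p q : ℝ) :
    ∫ x in p..q, AffineMap.lineMap a b ((x - p) / (q - p)) = (q - p) • midpoint ℝ a b := by
  obtain rfl | hpq := eq_or_ne p q
  · simp
  have hk : q - p ≠ 0 := sub_ne_zero.2 hpq.symm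
  rw [intervalIntegral.integral_comp_sub_right
      (fun y => AffineMap.lineMap a b (y / (q - p))) p,
    intervalIntegral.integral_comp_div (AffineMap.lineMap a b) hk, sub_self, zero_div,
    div_self hk, integral_lineMap_zero_one]

section InnerProductSpace

variable {V : Type*} [NormedAddCommGroup V] [InnerProductSpace ℝ V]

theorem integral_inner_lineMap_sub_div_sub (a b w : V) (p q : ℝ) :
    ∫ x in p..q, ⟪AffineMap.lineMap a b ((x - p) / (q - p)), w⟫
      = (q - p) * ⟪midpoint ℝ a b, w⟫ := by
  let ℓ : V →ᵃ[ℝ] ℝ := ((innerₗ V).flip w).toAffineMap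
  change ∫ x in p..q, ℓ (AffineMap.lineMap a b ((x - p) / (q - p)))
    = (q - p) * ℓ (midpoint ℝ a b)
  simp only [AffineMap.apply_lineMap, integral_lineMap_sub_div_sub, AffineMap.map_midpoint,
    smul_eq_mul]

theorem eq_midpoint_of_forall_integral_inner_eq_zero {Ψ : ℝ → V} {u : V} {p q : ℝ} (hpq : p ≠ q)
    (hΨ : ∀ x ∈ Set.uIcc p q, Ψ x = AffineMap.lineMap (Ψ p) (Ψ q) ((x - p) / (q - p)))
    (hu : ∀ w, ∫ x in p..q, (-⟪u, w⟫ + ⟪Ψ x, w⟫) = 0) :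
    u = midpoint ℝ (Ψ p) (Ψ q) := by
  refine ext_inner_right ℝ fun w => mul_left_cancel₀ (sub_ne_zero.2 hpq.symm) ?_
  have hmean : ∫ x in p..q, ⟪Ψ x, w⟫ = (q - p) * ⟪midpoint ℝ (Ψ p) (Ψ q), w⟫ := by
    rw [← integral_inner_lineMap_sub_div_sub]
    exact intervalIntegral.integral_congr fun x hx => by simp only [hΨ x hx]
  have hint : IntervalIntegrable (fun x => ⟪Ψ x, w⟫) MeasureTheory.volume p q := by
    have hcont : ContinuousOn Ψ (Set.uIcc p q) :=
      (AffineMap.lineMap_continuous.comp (by fun_prop)).continuousOn.congr hΨ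
    exact (hcont.inner continuousOn_const).intervalIntegrable
  have hzero := hu w
  rw [intervalIntegral.integral_add (by simp) hint, hmean, intervalIntegral.integral_const,
    smul_eq_mul] at hzero
  linarith

theorem inner_map_self_sub_inner_map_self {T : V →ₗ[ℝ] V} (hT : T.IsSymmetric) (x y : V) :
    ⟪y, T y⟫ - ⟪x, T x⟫ = 2 * ⟪y - x, T (midpoint ℝ x y)⟫ := by
  have hxy : ⟪y, T x⟫ = ⟪x, T y⟫ := by rw [← hT, real_inner_comm]
  simp only [midpoint_eq_smul_add, map_smul, map_add, real_inner_smul_right, inner_sub_left,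
    inner_add_right, hxy, invOf_eq_inv]
  ring

theorem inner_symm_sub_inner_symm_of_map_slope_eq {A : V ≃ₗ[ℝ] V}
    (hA : (A : V →ₗ[ℝ] V).IsSymmetric) (B : V →ₗ[ℝ] V) {Φ : ℝ → V} {p q : ℝ}
    (hΦ : A (slope Φ p q) = midpoint ℝ (B (Φ p)) (B (Φ q))) :
    ⟪B (Φ q), A.symm (B (Φ q))⟫ - ⟪B (Φ p), A.symm (B (Φ p))⟫
      = 2 * ((q - p) * ⟪B (slope Φ p q), slope Φ p q⟫) :=
  calc
    _ = 2 * ⟪B (Φ q) - B (Φ p), A.symm (midpoint ℝ (B (Φ p)) (B (Φ q)))⟫ :=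
      inner_map_self_sub_inner_map_self hA.toLinearMap_symm _ _
    _ = 2 * ⟪B (Φ q - Φ p), slope Φ p q⟫ := by
      rw [← map_sub, ← hΦ, A.symm_apply_apply]
    _ = 2 * ((q - p) * ⟪B (slope Φ p q), slope Φ p q⟫) := by
      rw [← vsub_eq_sub, ← sub_smul_slope, map_smul, real_inner_smul_left]

theorem viscoelastic_dual_L2_conservation_identity_general
    (A : V ≃ₗ[ℝ] V) (hA : (A : V →ₗ[ℝ] V).IsSymmetric) (B : V →ₗ[ℝ] V)
    (L : ℕ) (s : ℕ → ℝ) (hs : ∀ n < L, s n < s (n + 1)) (Φ : ℝ → V)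
    (hΦ : ∀ n < L, ∀ x ∈ Set.Icc (s n) (s (n + 1)),
      Φ x = AffineMap.lineMap (Φ (s n)) (Φ (s (n + 1))) ((x - s n) / (s (n + 1) - s n)))
    (hdual : ∀ n < L, ∀ w : V,
      ∫ x in s n..s (n + 1), (-⟪A (slope Φ (s n) (s (n + 1))), w⟫ + ⟪B (Φ x), w⟫) = 0) :
    ⟪B (Φ (s L)), A.symm (B (Φ (s L)))⟫
      - 2 * ∑ n ∈ Finset.range L, (s (n + 1) - s n) *
          ⟪B (slope Φ (s n) (s (n + 1))), slope Φ (s n) (s (n + 1))⟫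
    = ⟪B (Φ (s 0)), A.symm (B (Φ (s 0)))⟫ := by
  have hmid : ∀ n < L, A (slope Φ (s n) (s (n + 1)))
      = midpoint ℝ (B (Φ (s n))) (B (Φ (s (n + 1)))) := fun n hn => by
    refine eq_midpoint_of_forall_integral_inner_eq_zero (Ψ := fun x => B (Φ x)) (hs n hn).ne
      (fun x hx => ?_) (hdual n hn)
    rw [Set.uIcc_of_le (hs n hn).le] at hx
    exact (congrArg B (hΦ n hn x hx)).trans (B.toAffineMap.apply_lineMap _ _ _)
  have hincr : ∀ n ∈ Finset.range L, 2 * ((s (n + 1) - s n) *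
      ⟪B (slope Φ (s n) (s (n + 1))), slope Φ (s n) (s (n + 1))⟫)
      = ⟪B (Φ (s (n + 1))), A.symm (B (Φ (s (n + 1))))⟫
        - ⟪B (Φ (s n)), A.symm (B (Φ (s n)))⟫ := fun n hn =>
    (inner_symm_sub_inner_symm_of_map_slope_eq hA B (hmid n (Finset.mem_range.1 hn))).symm
  rw [Finset.mul_sum, Finset.sum_congr rfl hincr,
    Finset.sum_range_sub fun n => ⟪B (Φ (s n)), A.symm (B (Φ (s n)))⟫, sub_sub_cancel]

end InnerProductSpace

/-- Conservation identity underlying the `L²` stability estimate for the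
discrete dual problem: if `Φ` is continuous piecewise affine on the partition
`t_i = s_0 < ⋯ < s_L = t_j` and satisfies
`∫_{J_n} (-⟨AΦ̇, w⟩ + ⟨BΦ, w⟩) dt = 0` for all `w`, then
`⟨BΦ(t_j), A⁻¹BΦ(t_j)⟩ - 2 ∑_n k_n ⟨BΦ̇_n, Φ̇_n⟩ = ⟨BΦ(t_i), A⁻¹BΦ(t_i)⟩`,
where `Φ̇_n = (Φ(s_n) - Φ(s_{n-1}))/k_n` is the constant derivative of `Φ`
on `J_n`. -/
theorem viscoelastic_dual_L2_conservation_identity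
    {V : Type*} [NormedAddCommGroup V] [InnerProductSpace ℝ V]
    [FiniteDimensional ℝ V]
    (A Ainv B : V →ₗ[ℝ] V)
    (hA_symm : ∀ x y : V, ⟪A x, y⟫ = ⟪x, A y⟫)
    (hA_pos : ∀ x : V, x ≠ 0 → 0 < ⟪A x, x⟫)
    (hAinv : ∀ x, A (Ainv x) = x) (hAinv' : ∀ x, Ainv (A x) = x)
    (L : ℕ) (s : ℕ → ℝ) (hsmono : ∀ n < L, s n < s (n + 1))
    (Φ : ℝ → V)
    -- `Φ` is continuous and affine on each `[s_n, s_{n+1}]`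
    (hΦ_aff : ∀ n < L, ∀ x ∈ Set.Icc (s n) (s (n + 1)),
      Φ x = Φ (s n) + ((x - s n) / (s (n + 1) - s n)) • (Φ (s (n + 1)) - Φ (s n)))
    -- the discrete dual equation
    (hdual : ∀ n < L, ∀ w : V,
      (∫ x in s n..s (n + 1),
        (-⟪A ((s (n + 1) - s n)⁻¹ • (Φ (s (n + 1)) - Φ (s n))), w⟫
          + ⟪B (Φ x), w⟫)) = 0) :
    ⟪B (Φ (s L)), Ainv (B (Φ (s L)))⟫
      - 2 * ∑ n ∈ Finset.range L,
          (s (n + 1) - s n) *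
            ⟪B ((s (n + 1) - s n)⁻¹ • (Φ (s (n + 1)) - Φ (s n))),
              (s (n + 1) - s n)⁻¹ • (Φ (s (n + 1)) - Φ (s n))⟫
    = ⟪B (Φ (s 0)), Ainv (B (Φ (s 0)))⟫ := by
  exact viscoelastic_dual_L2_conservation_identity_general
    (.ofLinearMap A Ainv (LinearMap.ext hAinv) (LinearMap.ext hAinv')) hA_symm B L s hsmono Φ
    (fun n hn x hx => by rw [hΦ_aff n hn x hx, AffineMap.lineMap_apply_module', add_comm]) hdual
end

section
/- If ∫₀ᵏ [−Φ̇_VE(t) + Φ̇_0(t) + (1/τ)·Φ_VE(t)] dt = 0, then Φ_VE(0) = α·(Φ_0(0) − Φ_0(k)) + β·Φ_VE(k), where α = 2/(2 + k/τ) and β = (2 − k/τ)/(2 + k/τ); this is the explicit backward-in-time solution of the ODE relating the dual viscoelastic variable to the dual displacement variable over one timestep. -/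
/-!
Integrating the residual of the evolution equation exactly, the derivatives contribute endpoint
differences and an affine `Φ_VE` contributes its trapezoidal value `k / 2 • (Φ_VE(0) + Φ_VE(k))`.
What remains is a linear equation in which `Φ_VE(0)` has coefficient `(2 + k / τ) / 2`.
-/

open Set MeasureTheory

section Algebra

variable {K V : Type*} [Field K] [NeZero (2 : K)] [AddCommGroup V] [Module K V]

theorem trapezoidal_residual_eq_zero_iff {c : K} (hc : 2 + c ≠ 0) {x₀ x₁ y₀ y₁ : V} :
    -(y₁ - y₀) + (x₁ - x₀) + (c / 2) • (y₀ + y₁) = 0 ↔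
      y₀ = (2 / (2 + c)) • (x₀ - x₁) + ((2 - c) / (2 + c)) • y₁ := by
  have factor : -(y₁ - y₀) + (x₁ - x₀) + (c / 2) • (y₀ + y₁) =
      ((2 + c) / 2) • (y₀ - ((2 / (2 + c)) • (x₀ - x₁) + ((2 - c) / (2 + c)) • y₁)) := by
    match_scalars <;> field_simp
    ring
  rw [factor, smul_eq_zero_iff_right (div_ne_zero hc two_ne_zero), sub_eq_zero]

end Algebra

section Affine

variable {V : Type*} [NormedAddCommGroup V] [NormedSpace ℝ V] {a b : ℝ} {W : ℝ → V}

/-- `W` is affine on the interval `[a, b]`: it agrees there with the interpolation of its endpoint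
values, while its values outside the interval are arbitrary. -/
def IsAffineOnIcc (a b : ℝ) (W : ℝ → V) : Prop :=
  ∀ t ∈ Icc a b, W t = W a + ((t - a) / (b - a)) • (W b - W a)

theorem isAffineOnIcc_zero_iff :
    IsAffineOnIcc 0 b W ↔ ∀ t ∈ Icc 0 b, W t = W 0 + (t / b) • (W b - W 0) := by
  simp only [IsAffineOnIcc, sub_zero]

namespace IsAffineOnIcc

theorem continuousOn (hW : IsAffineOnIcc a b W) : ContinuousOn W (Icc a b) :=
  ContinuousOn.congr (by fun_prop) hW

theorem hasDerivAt (hW : IsAffineOnIcc a b W) {t : ℝ} (ht : t ∈ Ioo a b) :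
    HasDerivAt W ((b - a)⁻¹ • (W b - W a)) t := by
  have interpolant : HasDerivAt (fun s ↦ W a + ((s - a) / (b - a)) • (W b - W a))
      ((b - a)⁻¹ • (W b - W a)) t := by
    simpa only [one_div, id] using
      ((((hasDerivAt_id t).sub_const a).div_const (b - a)).smul_const (W b - W a)).const_add (W a)
  exact interpolant.congr_of_eventuallyEq
    (Filter.eventuallyEq_of_mem (Icc_mem_nhds ht.1 ht.2) hW)

theorem integral_eq [CompleteSpace V] (hW : IsAffineOnIcc a b W) (hab : a ≤ b) :
    ∫ t in a..b, W t = ((b - a) / 2) • (W a + W b) := by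
  have weight : ∫ t in a..b, (t - a) / (b - a) = (b - a) / 2 := by
    rw [intervalIntegral.integral_div, intervalIntegral.integral_comp_sub_right (fun t ↦ t),
      integral_id, sub_self, zero_pow two_ne_zero, sub_zero, div_right_comm, sq, mul_self_div_self]
  calc ∫ t in a..b, W t
      = ∫ t in a..b, (W a + ((t - a) / (b - a)) • (W b - W a)) :=
        intervalIntegral.integral_congr (by rwa [uIcc_of_le hab])
    _ = (b - a) • W a + ((b - a) / 2) • (W b - W a) := by
        rw [intervalIntegral.integral_add (Continuous.intervalIntegrable (by fun_prop) _ _)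
          (Continuous.intervalIntegrable (by fun_prop) _ _), intervalIntegral.integral_const,
          intervalIntegral.integral_smul_const, weight]
    _ = ((b - a) / 2) • (W a + W b) := by module

end IsAffineOnIcc

end Affine

section Viscoelastic

variable {V : Type*} [NormedAddCommGroup V] [NormedSpace ℝ V] [CompleteSpace V]
  {τ a b : ℝ} {Φ0 Φ0' ΦVE : ℝ → V}

theorem integral_viscoelastic_residual (hab : a < b)
    (hΦ0cont : ContinuousOn Φ0 (Icc a b)) (hΦ0deriv : ∀ t ∈ Ioo a b, HasDerivAt Φ0 (Φ0' t) t)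
    (hΦ0int : IntervalIntegrable Φ0' volume a b) (hΦVE : IsAffineOnIcc a b ΦVE) :
    ∫ t in a..b, (-((b - a)⁻¹ • (ΦVE b - ΦVE a)) + Φ0' t + (1 / τ) • ΦVE t) =
      -(ΦVE b - ΦVE a) + (Φ0 b - Φ0 a) + ((b - a) / τ / 2) • (ΦVE a + ΦVE b) := by
  have hΦVEint : IntervalIntegrable (fun t ↦ (1 / τ) • ΦVE t) volume a b :=
    (hΦVE.continuousOn.const_smul (1 / τ)).intervalIntegrable_of_Icc hab.le
  rw [intervalIntegral.integral_add (intervalIntegrable_const.add hΦ0int) hΦVEint,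
    intervalIntegral.integral_add intervalIntegrable_const hΦ0int,
    intervalIntegral.integral_const, intervalIntegral.integral_smul,
    intervalIntegral.integral_eq_sub_of_hasDerivAt_of_le hab.le hΦ0cont hΦ0deriv hΦ0int,
    hΦVE.integral_eq hab.le, smul_neg, smul_inv_smul₀ (sub_ne_zero.mpr hab.ne'), smul_smul]
  congr 2
  ring

theorem viscoelastic_dual_backward_update_general (hτ : τ ≠ 0) (hτab : 2 * τ + (b - a) ≠ 0)
    (hab : a < b)
    (hΦ0cont : ContinuousOn Φ0 (Icc a b)) (hΦ0deriv : ∀ t ∈ Ioo a b, HasDerivAt Φ0 (Φ0' t) t)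
    (hΦ0int : IntervalIntegrable Φ0' volume a b) (hΦVE : IsAffineOnIcc a b ΦVE)
    (hres : ∫ t in a..b, (-((b - a)⁻¹ • (ΦVE b - ΦVE a)) + Φ0' t + (1 / τ) • ΦVE t) = 0) :
    ΦVE a = (2 / (2 + (b - a) / τ)) • (Φ0 a - Φ0 b) +
      ((2 - (b - a) / τ) / (2 + (b - a) / τ)) • ΦVE b := by
  have hdenom : 2 + (b - a) / τ ≠ 0 := by
    rw [← mul_div_cancel_right₀ 2 hτ, ← add_div]
    exact div_ne_zero hτab hτ
  rw [integral_viscoelastic_residual hab hΦ0cont hΦ0deriv hΦ0int hΦVE] at hres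
  exact (trapezoidal_residual_eq_zero_iff hdenom).mp hres

end Viscoelastic

/-- Explicit backward-in-time solution of the ODE relating the dual viscoelastic
variable to the dual displacement variable over one timestep: if `Φ_0` and
`Φ_VE` are affine on `[0,k]` and
`∫₀ᵏ (-Φ̇_VE + Φ̇_0 + (1/τ) Φ_VE) dt = 0` (where the derivative of an affine
function `W` is the constant `(W(k) - W(0))/k`), then
`Φ_VE(0) = α (Φ_0(0) - Φ_0(k)) + β Φ_VE(k)` with `α = 2/(2 + k/τ)` and
`β = (2 - k/τ)/(2 + k/τ)`. -/
theorem viscoelastic_dual_backward_update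
    {V : Type*} [NormedAddCommGroup V] [NormedSpace ℝ V] [CompleteSpace V]
    (τ k : ℝ) (hτ : 0 < τ) (hk : 0 < k)
    (Φ0 ΦVE : ℝ → V)
    (hΦ0aff : ∀ t ∈ Set.Icc (0:ℝ) k, Φ0 t = Φ0 0 + (t / k) • (Φ0 k - Φ0 0))
    (hΦVEaff : ∀ t ∈ Set.Icc (0:ℝ) k, ΦVE t = ΦVE 0 + (t / k) • (ΦVE k - ΦVE 0))
    (hres : (∫ t in (0:ℝ)..k,
        (-(k⁻¹ • (ΦVE k - ΦVE 0)) + k⁻¹ • (Φ0 k - Φ0 0)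
          + (1 / τ) • ΦVE t)) = 0) :
    ΦVE 0 = (2 / (2 + k / τ)) • (Φ0 0 - Φ0 k)
      + ((2 - k / τ) / (2 + k / τ)) • ΦVE k := by
  have hΦ0 : IsAffineOnIcc 0 k Φ0 := isAffineOnIcc_zero_iff.mpr hΦ0aff
  simpa only [sub_zero] using viscoelastic_dual_backward_update_general hτ.ne'
    (by rw [sub_zero]; positivity) hk hΦ0.continuousOn (fun _ ↦ hΦ0.hasDerivAt)
    intervalIntegrable_const (isAffineOnIcc_zero_iff.mpr hΦVEaff) (by rwa [sub_zero])
end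

section
/- For every 1 ≤ n ≤ N: Φ_VE(n−1) = α·Φ_0(n−1) − α·β^{N−n}·Φ_0(N) − (α²k/τ)·Σ_{i=n}^{N−1} β^{i−n}·Φ_0(i); i.e., the dual viscoelastic variable admits a closed-form expansion entirely in terms of the dual displacement values, with exponentially decaying coefficients. -/
/-!
Iterating the recurrence down from the terminal time `N` gives `Φ_VE(m)` as the sum of
`α β^{i-m} (Φ_0(i) - Φ_0(i+1))` over `m ≤ i < N`. Summation by parts moves the difference onto the
powers of `β`, where each step produces the factor `1 - β`, and `1 - β = α k/τ`.
-/

section PowerWeightedSums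

open Finset

variable {R V : Type*}

theorem sum_Ico_pow_smul_eq_add_smul_sum [Semiring R] [AddCommMonoid V] [Module R V]
    (β : R) (f : ℕ → V) {m N : ℕ} (hm : m < N) :
    ∑ i ∈ Ico m N, β ^ (i - m) • f i =
      f m + β • ∑ i ∈ Ico (m + 1) N, β ^ (i - (m + 1)) • f i := by
  rw [sum_eq_sum_Ico_succ_bot hm, Nat.sub_self, pow_zero, one_smul, smul_sum]
  congr 1
  refine sum_congr rfl fun i hi => ?_
  have hmi : m + 1 ≤ i := (mem_Ico.mp hi).1
  rw [smul_smul, ← pow_succ', show i - (m + 1) + 1 = i - m by omega]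

theorem eq_pow_smul_add_sum_of_backward_recurrence [Semiring R] [AddCommMonoid V] [Module R V]
    {β : R} {x b : ℕ → V} {N : ℕ} (hx : ∀ i < N, x i = b i + β • x (i + 1))
    {m : ℕ} (hm : m ≤ N) :
    x m = β ^ (N - m) • x N + ∑ i ∈ Ico m N, β ^ (i - m) • b i := by
  induction hm using Nat.decreasingInduction with
  | self => simp
  | of_succ m hm ih =>
    calc x m = b m + β • x (m + 1) := hx m hm
      _ = β ^ (N - (m + 1) + 1) • x N +
            (b m + β • ∑ i ∈ Ico (m + 1) N, β ^ (i - (m + 1)) • b i) := by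
          rw [ih, smul_add, smul_smul, ← pow_succ', add_left_comm]
      _ = β ^ (N - m) • x N + ∑ i ∈ Ico m N, β ^ (i - m) • b i := by
          rw [sum_Ico_pow_smul_eq_add_smul_sum β b hm, show N - (m + 1) + 1 = N - m by omega]

theorem sum_Ico_pow_smul_sub_succ [Ring R] [AddCommGroup V] [Module R V]
    (β : R) (f : ℕ → V) {m N : ℕ} (hm : m < N) :
    ∑ i ∈ Ico m N, β ^ (i - m) • (f i - f (i + 1)) =
      f m - β ^ (N - (m + 1)) • f N -
        (1 - β) • ∑ i ∈ Ico (m + 1) N, β ^ (i - (m + 1)) • f i := by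
  have shifted : ∑ i ∈ Ico m N, β ^ (i - m) • f (i + 1) =
      ∑ i ∈ Ico (m + 1) N, β ^ (i - (m + 1)) • f i + β ^ (N - (m + 1)) • f N := by
    rw [← sum_Ico_succ_top (show m + 1 ≤ N from hm) fun i => β ^ (i - (m + 1)) • f i,
      ← sum_Ico_add' (fun i => β ^ (i - (m + 1)) • f i) m N 1]
    simp only [Nat.add_sub_add_right]
  simp only [smul_sub, sum_sub_distrib]
  rw [shifted, sum_Ico_pow_smul_eq_add_smul_sum β f hm, sub_smul, one_smul]
  abel

end PowerWeightedSums

theorem two_sub_div_two_add {K : Type*} [Field K] {r : K} (hr : 2 + r ≠ 0) :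
    (2 - r) / (2 + r) = 1 - 2 / (2 + r) * r := by
  field_simp
  ring

-- The relation `β = 1 - α r` holds for every `θ`-scheme, `α = 1/(1 + θ r)` and
-- `β = (1 - (1 - θ) r)/(1 + θ r)`; the viscoelastic problem has `θ = 1/2` and `r = k/τ`.
theorem viscoelastic_dual_expansion_general
    {R V : Type*} [CommRing R] [AddCommGroup V] [Module R V]
    {α β r : R} (hβ : β = 1 - α * r) {N : ℕ} {ΦVE Φ0 : ℕ → V}
    (hrec : ∀ i : ℕ, 1 ≤ i → i ≤ N →
      ΦVE (i - 1) = α • (Φ0 (i - 1) - Φ0 i) + β • ΦVE i)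
    {n : ℕ} (hn : 1 ≤ n) (hnN : n ≤ N) :
    ΦVE (n - 1) = α • Φ0 (n - 1) - (α * β ^ (N - n)) • Φ0 N
      - (α ^ 2 * r) • ∑ i ∈ Finset.Ico n N, β ^ (i - n) • Φ0 i
      + β ^ (N - (n - 1)) • ΦVE N := by
  obtain ⟨m, rfl⟩ := Nat.exists_eq_add_of_le' hn
  have hstep : ∀ i < N, ΦVE i = α • (Φ0 i - Φ0 (i + 1)) + β • ΦVE (i + 1) :=
    fun i hi => hrec (i + 1) i.succ_pos hi
  have hcoeff : α ^ 2 * r = α * (1 - β) := by rw [hβ]; ring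
  rw [Nat.add_sub_cancel, eq_pow_smul_add_sum_of_backward_recurrence hstep (Nat.le_of_lt hnN)]
  simp only [smul_comm _ α, ← Finset.smul_sum]
  rw [sum_Ico_pow_smul_sub_succ β Φ0 hnN, hcoeff]
  module

/-- Closed-form expansion of the dual viscoelastic variable entirely in terms of
the dual displacement values: if `Φ_VE(N) = 0` and
`Φ_VE(i-1) = α (Φ_0(i-1) - Φ_0(i)) + β Φ_VE(i)` for `1 ≤ i ≤ N`, where
`α = 2/(2 + k/τ)` and `β = (2 - k/τ)/(2 + k/τ)`, then for every `1 ≤ n ≤ N`,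
`Φ_VE(n-1) = α Φ_0(n-1) - α β^{N-n} Φ_0(N)
  - (α² k/τ) ∑_{i=n}^{N-1} β^{i-n} Φ_0(i)`. -/
theorem viscoelastic_dual_expansion
    {V : Type*} [AddCommGroup V] [Module ℝ V]
    (τ k : ℝ) (hτ : 0 < τ) (hk : 0 < k)
    (α β : ℝ) (hα : α = 2 / (2 + k / τ)) (hβ : β = (2 - k / τ) / (2 + k / τ))
    (N : ℕ) (hN : 1 ≤ N)
    (ΦVE Φ0 : ℕ → V)
    (hterm : ΦVE N = 0)
    (hrec : ∀ i : ℕ, 1 ≤ i → i ≤ N →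
      ΦVE (i - 1) = α • (Φ0 (i - 1) - Φ0 i) + β • ΦVE i) :
    ∀ n : ℕ, 1 ≤ n → n ≤ N →
      ΦVE (n - 1) = α • Φ0 (n - 1) - (α * β ^ (N - n)) • Φ0 N
        - (α ^ 2 * k / τ) • ∑ i ∈ Finset.Ico n N, β ^ (i - n) • Φ0 i := by
  have hβα : β = 1 - α * (k / τ) := by rw [hα, hβ, two_sub_div_two_add (by positivity)]
  intro n hn hnN
  simpa [hterm, mul_div_assoc] using viscoelastic_dual_expansion_general hβα hrec hn hnN
end

section
/- For every 1 ≤ n ≤ N: ‖α·Φ_0(n−1) − Φ_VE(n−1)‖ ≤ α·|β|^{N−n}·‖Φ_0(N)‖ + (α²k/τ)·Σ_{i=n}^{N−1} |β|^{i−n}·‖Φ_0(i)‖, and consequently ‖α·Φ_0(n−1) − Φ_VE(n−1)‖ ≤ ‖Φ_0(N)‖ + max_{n ≤ i ≤ N−1} ‖Φ_0(i)‖ (with the convention that a sum or maximum over an empty index range is 0). -/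
/-!
Both bounds concern the combination `v i = α • Φ0 i - β • ΦVE i`. The backward recurrence says
exactly that `α • Φ0 (i - 1) - ΦVE (i - 1) = v i`, whence
`v i = β • v (i + 1) + (α * (1 - β)) • Φ0 i` with terminal value `v N = α • Φ0 N`, and unrolling
this first-order recursion gives the first bound. For the second, `2 * α = 1 + β` gives
`α * (1 - β) = (1 - β ^ 2) / 2 ≤ 1 - |β|`, so the coefficients in the sum add up to at most `1`.
-/

open Finset

theorem discrete_gronwall_backward {R : Type*} [Semiring R] [PartialOrder R] [IsOrderedRing R]
    {q : R} {u b : ℕ → R} {n N : ℕ} (hq : 0 ≤ q) (hnN : n ≤ N)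
    (hu : ∀ i ∈ Ico n N, u i ≤ q * u (i + 1) + b i) :
    u n ≤ q ^ (N - n) * u N + ∑ i ∈ Ico n N, q ^ (i - n) * b i := by
  induction N, hnN using Nat.le_induction with
  | base => simp
  | succ N hnN ih =>
    have hlast : u N ≤ q * u (N + 1) + b N := hu N (by simp [hnN])
    calc u n ≤ q ^ (N - n) * u N + ∑ i ∈ Ico n N, q ^ (i - n) * b i :=
          ih fun i hi ↦ hu i (Ico_subset_Ico_right N.le_succ hi)
      _ ≤ q ^ (N - n) * (q * u (N + 1) + b N) + ∑ i ∈ Ico n N, q ^ (i - n) * b i := by gcongr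
      _ = q ^ (N + 1 - n) * u (N + 1) + ∑ i ∈ Ico n (N + 1), q ^ (i - n) * b i := by
          rw [sum_Ico_succ_top hnN, Nat.succ_sub hnN, pow_succ, mul_add, mul_assoc]
          abel

theorem one_sub_mul_sum_Ico_pow_mul_le {R : Type*} [Ring R] [PartialOrder R] [IsOrderedRing R]
    {q M : R} {f : ℕ → R} {n N : ℕ} (hq₀ : 0 ≤ q) (hq₁ : q ≤ 1) (hM : 0 ≤ M)
    (hf : ∀ i ∈ Ico n N, f i ≤ M) :
    (1 - q) * ∑ i ∈ Ico n N, q ^ (i - n) * f i ≤ M := by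
  have hsum : ∑ i ∈ Ico n N, q ^ (i - n) * f i ≤ (∑ i ∈ Ico n N, q ^ (i - n)) * M := by
    rw [sum_mul]
    exact sum_le_sum fun i hi ↦ mul_le_mul_of_nonneg_left (hf i hi) (pow_nonneg hq₀ _)
  have hgeom : (1 - q) * ∑ i ∈ Ico n N, q ^ (i - n) = 1 - q ^ (N - n) := by
    simp only [sum_Ico_eq_sum_range, Nat.add_sub_cancel_left, mul_neg_geom_sum]
  calc (1 - q) * ∑ i ∈ Ico n N, q ^ (i - n) * f i
      ≤ (1 - q) * ((∑ i ∈ Ico n N, q ^ (i - n)) * M) :=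
        mul_le_mul_of_nonneg_left hsum (sub_nonneg.2 hq₁)
    _ = (1 - q ^ (N - n)) * M := by rw [← mul_assoc, hgeom]
    _ ≤ M := mul_le_of_le_one_left hM (sub_le_self 1 (pow_nonneg hq₀ _))

section BackwardRecurrence

variable {𝕜 V : Type*} [NormedField 𝕜] [SeminormedAddCommGroup V] [NormedSpace 𝕜 V]
  {α β : 𝕜} {φ ψ : ℕ → V} {n N : ℕ}

theorem norm_le_pow_mul_add_sum_of_backward_recurrence (hnN : n ≤ N) (hψ : ψ N = 0)
    (hrec : ∀ i ∈ Ico n N, ψ i = α • (φ i - φ (i + 1)) + β • ψ (i + 1)) :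
    ‖α • φ n - β • ψ n‖ ≤ ‖α‖ * ‖β‖ ^ (N - n) * ‖φ N‖
      + ‖α * (1 - β)‖ * ∑ i ∈ Ico n N, ‖β‖ ^ (i - n) * ‖φ i‖ := by
  have hstep : ∀ i ∈ Ico n N, ‖α • φ i - β • ψ i‖
      ≤ ‖β‖ * ‖α • φ (i + 1) - β • ψ (i + 1)‖ + ‖α * (1 - β)‖ * ‖φ i‖ := fun i hi ↦ by
    have hv : α • φ i - β • ψ i
        = β • (α • φ (i + 1) - β • ψ (i + 1)) + (α * (1 - β)) • φ i := by
      rw [hrec i hi]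
      module
    rw [hv, ← norm_smul, ← norm_smul]
    exact norm_add_le _ _
  have hterm : ‖α • φ N - β • ψ N‖ = ‖α‖ * ‖φ N‖ := by rw [hψ, smul_zero, sub_zero, norm_smul]
  calc ‖α • φ n - β • ψ n‖
      ≤ ‖β‖ ^ (N - n) * ‖α • φ N - β • ψ N‖
        + ∑ i ∈ Ico n N, ‖β‖ ^ (i - n) * (‖α * (1 - β)‖ * ‖φ i‖) :=
        discrete_gronwall_backward (u := fun i ↦ ‖α • φ i - β • ψ i‖)
          (norm_nonneg β) hnN hstep
    _ = _ := by
        simp only [hterm, mul_sum, mul_left_comm ‖α * (1 - β)‖]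
        ring

theorem norm_le_norm_add_of_backward_recurrence {M : ℝ} (hα : ‖α‖ ≤ 1)
    (hαβ : ‖α * (1 - β)‖ ≤ 1 - ‖β‖) (hnN : n ≤ N) (hψ : ψ N = 0)
    (hrec : ∀ i ∈ Ico n N, ψ i = α • (φ i - φ (i + 1)) + β • ψ (i + 1))
    (hM : 0 ≤ M) (hφ : ∀ i ∈ Ico n N, ‖φ i‖ ≤ M) :
    ‖α • φ n - β • ψ n‖ ≤ ‖φ N‖ + M := by
  have hβ : ‖β‖ ≤ 1 := sub_nonneg.1 ((norm_nonneg _).trans hαβ)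
  have hcoeff : ‖α‖ * ‖β‖ ^ (N - n) ≤ 1 :=
    mul_le_one₀ hα (by positivity) (pow_le_one₀ (norm_nonneg β) hβ)
  calc ‖α • φ n - β • ψ n‖
      ≤ ‖α‖ * ‖β‖ ^ (N - n) * ‖φ N‖
        + ‖α * (1 - β)‖ * ∑ i ∈ Ico n N, ‖β‖ ^ (i - n) * ‖φ i‖ :=
        norm_le_pow_mul_add_sum_of_backward_recurrence hnN hψ hrec
    _ ≤ 1 * ‖φ N‖ + (1 - ‖β‖) * ∑ i ∈ Ico n N, ‖β‖ ^ (i - n) * ‖φ i‖ := by gcongr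
    _ ≤ ‖φ N‖ + M := by
        rw [one_mul]
        gcongr
        exact one_sub_mul_sum_Ico_pow_mul_le (norm_nonneg β) hβ hM hφ

end BackwardRecurrence

theorem one_add_two_sub_div_two_add {K : Type*} [Field K] {x : K} (hx : 2 + x ≠ 0) :
    1 + (2 - x) / (2 + x) = 2 * (2 / (2 + x)) := by
  field_simp
  ring

theorem one_sub_two_sub_div_two_add {K : Type*} [Field K] {x : K} (hx : 2 + x ≠ 0) :
    1 - (2 - x) / (2 + x) = 2 / (2 + x) * x := by
  field_simp
  ring

theorem mul_one_sub_le_one_sub_abs {R : Type*} [CommRing R] [LinearOrder R]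
    [IsStrictOrderedRing R] {a b : R} (h : 1 + b = 2 * a) : a * (1 - b) ≤ 1 - |b| := by
  have hsq : 2 * (a * (1 - b)) = 1 - |b| ^ 2 := by
    rw [sq_abs]
    linear_combination -(1 - b) * h
  linarith [sq_nonneg (1 - |b|)]

/-- Norm bounds for the dual viscoelastic variable in terms of the dual
displacement values: under the terminal condition `Φ_VE(N) = 0` and the
backward recurrence `Φ_VE(i-1) = α (Φ_0(i-1) - Φ_0(i)) + β Φ_VE(i)`, for every
`1 ≤ n ≤ N` we have both
`‖α Φ_0(n-1) - Φ_VE(n-1)‖ ≤ α |β|^{N-n} ‖Φ_0(N)‖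
    + (α² k/τ) ∑_{i=n}^{N-1} |β|^{i-n} ‖Φ_0(i)‖`
and
`‖α Φ_0(n-1) - Φ_VE(n-1)‖ ≤ ‖Φ_0(N)‖ + max_{n ≤ i ≤ N-1} ‖Φ_0(i)‖`
(the maximum over an empty index range being `0`). -/
theorem viscoelastic_dual_norm_bounds
    {V : Type*} [NormedAddCommGroup V] [NormedSpace ℝ V]
    (τ k : ℝ) (hτ : 0 < τ) (hk : 0 < k)
    (α β : ℝ) (hα : α = 2 / (2 + k / τ)) (hβ : β = (2 - k / τ) / (2 + k / τ))
    (N : ℕ) (hN : 1 ≤ N)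
    (ΦVE Φ0 : ℕ → V)
    (hterm : ΦVE N = 0)
    (hrec : ∀ i : ℕ, 1 ≤ i → i ≤ N →
      ΦVE (i - 1) = α • (Φ0 (i - 1) - Φ0 i) + β • ΦVE i) :
    ∀ n : ℕ, 1 ≤ n → n ≤ N →
      ‖α • Φ0 (n - 1) - ΦVE (n - 1)‖
          ≤ α * |β| ^ (N - n) * ‖Φ0 N‖
            + (α ^ 2 * k / τ) * ∑ i ∈ Finset.Ico n N, |β| ^ (i - n) * ‖Φ0 i‖
        ∧ ‖α • Φ0 (n - 1) - ΦVE (n - 1)‖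
          ≤ ‖Φ0 N‖ + ↑((Finset.Ico n N).sup fun i => ‖Φ0 i‖₊) := by
  have hx : 0 < k / τ := div_pos hk hτ
  have hα₀ : 0 < α := hα ▸ by positivity
  have hα₁ : α ≤ 1 := by rw [hα, div_le_one (by positivity)]; linarith
  have hadd : 1 + β = 2 * α := by
    rw [hα, hβ]; exact one_add_two_sub_div_two_add (by positivity)
  have hsub : 1 - β = α * (k / τ) := by
    rw [hα, hβ]; exact one_sub_two_sub_div_two_add (by positivity)
  have hcoeff : α ^ 2 * k / τ = α * (1 - β) := by rw [hsub]; ring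
  have hcoeff₀ : 0 ≤ α * (1 - β) := by rw [hsub]; positivity
  intro n hn hnN
  have hv : α • Φ0 (n - 1) - ΦVE (n - 1) = α • Φ0 n - β • ΦVE n := by
    rw [hrec n hn hnN]; module
  have hrec' : ∀ i ∈ Ico n N, ΦVE i = α • (Φ0 i - Φ0 (i + 1)) + β • ΦVE (i + 1) := fun i hi ↦
    hrec (i + 1) i.succ_pos (mem_Ico.1 hi).2
  rw [hv, hcoeff]
  constructor
  · simpa only [Real.norm_eq_abs, abs_of_pos hα₀, abs_of_nonneg hcoeff₀] using
      norm_le_pow_mul_add_sum_of_backward_recurrence hnN hterm hrec'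
  · refine norm_le_norm_add_of_backward_recurrence ?_ ?_ hnN hterm hrec' (NNReal.coe_nonneg _)
      fun i hi ↦ NNReal.coe_le_coe.2 (le_sup (f := fun i ↦ ‖Φ0 i‖₊) hi)
    · rwa [Real.norm_of_nonneg hα₀.le]
    · rw [Real.norm_of_nonneg hcoeff₀]
      exact mul_one_sub_le_one_sub_abs hadd
end
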